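/- Fix d ≥ 2 and C > 0. In the uniformly random d-regular graph on n vertices, the joint distribution of the numbers of cycles of each length ℓ ≤ C converges, as n → ∞, to a vector of independent Poisson random variables with means (d−1)^ℓ/(2ℓ). Consequently, for the random 2-regular graph, the limiting probability that for each ℓ in a finite set the graph contains (respectively, does not contain) a cycle of length ℓ is ∏(1 − e^{−1/(2ℓ)}) · ∏ e^{−1/(2ℓ)} over the respective index sets. -/

import Mathlib

open Filter Topology
open scoped BigOperators

/-- The set of `d`-regular graphs on `Fin n`. -/
def regularGraphs (d n : ℕ) : Set (SimpleGraph (Fin n)) :=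
  {G | ∀ v, (G.neighborSet v).ncard = d}

/-- The number of cycles of length `ℓ` in `G` (each cycle is traversed by `2ℓ`
injective cyclic sequences of adjacent vertices). -/
noncomputable def cycleCount {n : ℕ} (G : SimpleGraph (Fin n)) (ℓ : ℕ) : ℕ :=
  Set.ncard {f : ZMod ℓ → Fin n |
    Function.Injective f ∧ ∀ i : ZMod ℓ, G.Adj (f i) (f (i + 1))} / (2 * ℓ)

/-- The probability of the event `E` for a uniformly random `d`-regular graph on `Fin n`. -/
noncomputable def regularPr (d n : ℕ) (E : Set (SimpleGraph (Fin n))) : ℝ :=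
  (Set.ncard (regularGraphs d n ∩ E) : ℝ) / (Set.ncard (regularGraphs d n) : ℝ)

/-!
By the method of moments, it suffices that the expectation of `∏ ℓ, (C_ℓ choose r_ℓ)` converges to
`∏ ℓ, λ_ℓ ^ r_ℓ / r_ℓ!` with `λ_ℓ = (d - 1) ^ ℓ / (2 * ℓ)`; the Bonferroni inequalities then give
the point probabilities, one length at a time.

Up to the factor `∏ ℓ, (2 * ℓ) ^ r_ℓ * r_ℓ!`, this product counts tuples of pairwise distinct cycles
given as cyclic sequences of vertices. A set `H` of `k` edges lies in the random graph with
probability `∏ v, d (d - 1) ⋯ (d - deg_H v + 1) / (d * n) ^ k`, up to an error `O(1 / n ^ (k + 1))`: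
adding an edge `uv` to `H` is controlled by a double count of the switchings that replace
`uv, xz, yw` by `ux, vy, zw`. Vertex-disjoint tuples with `m` vertices have `m` edges and all their
degrees are two, so each contributes `((d - 1) / n) ^ m` and all of them together `(d - 1) ^ m`.
Tuples whose cycles intersect have more edges than vertices and contribute `O(1 / n)` in total.
-/

namespace RandomRegular

universe u

section FactorialMoments

theorem tendsto_of_forall_abs_sub_le {ι : Type*} {l : Filter ι} {u : ι → ℝ} {T e : ℕ → ι → ℝ}
    {τ ρ : ℕ → ℝ} {L : ℝ} (hT : ∀ J, Tendsto (T J) l (𝓝 (τ J)))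
    (he : ∀ J, Tendsto (e J) l (𝓝 (ρ J))) (hu : ∀ J i, |u i - T J i| ≤ e J i)
    (hτ : Tendsto τ atTop (𝓝 L)) (hρ : Tendsto ρ atTop (𝓝 0)) : Tendsto u l (𝓝 L) := by
  rw [Metric.tendsto_nhds]
  intro ε hε
  obtain ⟨J, hτJ, hρJ⟩ := ((Metric.tendsto_nhds.1 hτ (ε / 3) (by positivity)).and
    (hρ.eventually_lt_const (show 0 < ε / 3 by positivity))).exists
  filter_upwards [Metric.tendsto_nhds.1 (hT J) (ε / 3) (by positivity),
    (he J).eventually_lt_const hρJ] with i hTi hei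
  rw [Real.dist_eq] at *
  calc |u i - L| = |(u i - T J i) + (T J i - τ J) + (τ J - L)| := by ring_nf
    _ ≤ |u i - T J i| + |T J i - τ J| + |τ J - L| := abs_add_three _ _ _
    _ < ε := by linarith [hu J i]

theorem abs_ite_eq_zero_sub_alternating_sum_choose_le (m J : ℕ) :
    |(if m = 0 then 1 else 0 : ℝ) - ∑ j ∈ Finset.range J, (-1) ^ j * (m.choose j : ℝ)|
      ≤ m.choose J := by
  rcases J with _ | J
  · split_ifs <;> simp
  rcases m with _ | m
  · simp [Finset.sum_range_succ']
  have hsum : ∑ j ∈ Finset.range (J + 1), (-1) ^ j * ((m + 1).choose j : ℝ)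
      = (-1) ^ J * (m.choose J : ℝ) := by
    exact_mod_cast Int.alternating_sum_range_choose_eq_choose (n := m) (m := J)
  rw [hsum, if_neg m.succ_ne_zero, zero_sub, abs_neg, abs_mul, abs_pow, abs_neg, abs_one, one_pow,
    one_mul, Nat.abs_cast]
  exact_mod_cast Nat.choose_succ_succ m J ▸ Nat.le_add_right _ _

theorem abs_ite_eq_sub_sum_choose_mul_choose_le (x a J : ℕ) :
    |(if x = a then 1 else 0 : ℝ)
        - ∑ j ∈ Finset.range J, (-1) ^ j * ((a + j).choose a * x.choose (a + j) : ℝ)|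
      ≤ (a + J).choose a * x.choose (a + J) := by
  have hchoose (j : ℕ) : ((a + j).choose a * x.choose (a + j) : ℝ)
      = x.choose a * (x - a).choose j := by
    have := Nat.choose_mul (n := x) (Nat.le_add_right a j)
    rw [Nat.add_sub_cancel_left] at this
    exact_mod_cast (mul_comm _ _).trans this
  have hite : (if x = a then 1 else 0 : ℝ) = x.choose a * if x - a = 0 then 1 else 0 := by
    rcases lt_trichotomy x a with h | rfl | h
    · simp [h.ne, Nat.choose_eq_zero_of_lt h]
    · simp
    · simp [h.ne', (Nat.sub_pos_of_lt h).ne']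
  simp only [hchoose, mul_left_comm _ (x.choose a : ℝ)]
  rw [hite, ← Finset.mul_sum, ← mul_sub, abs_mul, Nat.abs_cast]
  gcongr
  exact abs_ite_eq_zero_sub_alternating_sum_choose_le _ _

theorem choose_mul_pow_div_factorial (a j : ℕ) (lam : ℝ) :
    ((a + j).choose a : ℝ) * (lam ^ (a + j) / (a + j).factorial)
      = lam ^ a / a.factorial * (lam ^ j / j.factorial) := by
  have h : ((a + j).choose a * a.factorial * j.factorial : ℝ) = (a + j).factorial := by
    rw [Nat.choose_symm_add]
    exact_mod_cast Nat.add_choose_mul_factorial_mul_factorial a j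
  rw [div_mul_div_comm, ← pow_add, ← mul_div_assoc,
    div_eq_div_iff (by positivity) (by positivity), ← h]
  ring

variable {ι : Type*} {l : Filter ι} {Ω : ι → Type*} {S : ∀ i, Finset (Ω i)}

open Finset in
theorem tendsto_expect_mul_ite_eq {W : ∀ i, Ω i → ℝ} {X : ∀ i, Ω i → ℕ} {m lam : ℝ}
    (hW : ∀ i ω, 0 ≤ W i ω)
    (hmoment : ∀ r, Tendsto (fun i => 𝔼 ω ∈ S i, W i ω * (X i ω).choose r) l
      (𝓝 (m * (lam ^ r / r.factorial)))) (a : ℕ) :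
    Tendsto (fun i => 𝔼 ω ∈ S i, W i ω * if X i ω = a then 1 else 0) l
      (𝓝 (m * (Real.exp (-lam) * lam ^ a / a.factorial))) := by
  have hterm (j : ℕ) : Tendsto
      (fun i => (a + j).choose a * 𝔼 ω ∈ S i, W i ω * (X i ω).choose (a + j)) l
      (𝓝 (m * (lam ^ a / a.factorial) * (lam ^ j / j.factorial))) := by
    convert (hmoment (a + j)).const_mul ((a + j).choose a : ℝ) using 2
    rw [mul_left_comm, choose_mul_pow_div_factorial, mul_assoc]
  refine tendsto_of_forall_abs_sub_le
    (fun J => tendsto_finsetSum (range J) fun j _ => (hterm j).const_mul ((-1) ^ j))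
    hterm (fun J i => ?_) ?_ ?_
  · calc |𝔼 ω ∈ S i, (W i ω * if X i ω = a then 1 else 0)
          - ∑ j ∈ range J, (-1) ^ j *
              ((a + j).choose a * 𝔼 ω ∈ S i, W i ω * (X i ω).choose (a + j))|
        = |𝔼 ω ∈ S i, W i ω * ((if X i ω = a then 1 else 0)
            - ∑ j ∈ range J, (-1) ^ j * ((a + j).choose a * (X i ω).choose (a + j) : ℝ))| := by
          simp only [mul_sub, expect_sub_distrib, mul_sum, ← expect_sum_comm, mul_expect]
          simp only [mul_left_comm]
      _ ≤ 𝔼 ω ∈ S i, W i ω * ((a + J).choose a * (X i ω).choose (a + J)) := by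
          refine (abs_expect_le _ _).trans (expect_le_expect fun ω _ => ?_)
          rw [abs_mul, abs_of_nonneg (hW i ω)]
          exact mul_le_mul_of_nonneg_left
            (abs_ite_eq_sub_sum_choose_mul_choose_le (X i ω) a J) (hW i ω)
      _ = (a + J).choose a * 𝔼 ω ∈ S i, W i ω * (X i ω).choose (a + J) := by
          rw [mul_expect]
          exact expect_congr rfl fun ω _ => mul_left_comm _ _ _
  · have hexp : HasSum (fun j : ℕ => (-lam) ^ j / j.factorial) (Real.exp (-lam)) := by
      rw [Real.exp_eq_exp_ℝ]
      exact NormedSpace.expSeries_div_hasSum_exp (-lam)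
    convert (hexp.mul_left (m * (lam ^ a / a.factorial))).tendsto_sum_nat using 2 with J
    · refine sum_congr rfl fun j _ => ?_
      rw [neg_pow lam j]
      ring
    · ring
  · simpa using (FloorSemiring.tendsto_pow_div_factorial_atTop lam).const_mul
      (m * (lam ^ a / a.factorial))

open Finset in
/-- The method of factorial moments. The weights `W` serve the induction on `T`, where they absorb
the indicators of the components already treated. -/
theorem tendsto_expect_prod_ite_eq {κ : Type*} {X : ∀ i, Ω i → κ → ℕ} {lam : κ → ℝ}
    (T : Finset κ) {W : ∀ i, Ω i → ℝ} {m : ℝ} (hW : ∀ i ω, 0 ≤ W i ω)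
    (hmoment : ∀ r : κ → ℕ, Tendsto
      (fun i => 𝔼 ω ∈ S i, W i ω * ∏ k ∈ T, ((X i ω k).choose (r k) : ℝ)) l
      (𝓝 (m * ∏ k ∈ T, lam k ^ r k / (r k).factorial))) (a : κ → ℕ) :
    Tendsto (fun i => 𝔼 ω ∈ S i, W i ω * ∏ k ∈ T, if X i ω k = a k then 1 else 0) l
      (𝓝 (m * ∏ k ∈ T, Real.exp (-lam k) * lam k ^ a k / (a k).factorial)) := by
  classical
  induction T using Finset.induction_on generalizing W m with
  | empty => simpa using hmoment 0
  | insert k T hk ih =>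
    have hprod (r : κ → ℕ) (ρ : ℕ) (F : κ → ℕ → ℝ) :
        ∏ j ∈ insert k T, F j (Function.update r k ρ j) = F k ρ * ∏ j ∈ T, F j (r j) := by
      rw [prod_insert hk, Function.update_self]
      congr 1
      refine prod_congr rfl fun j hj => ?_
      rw [Function.update_of_ne (ne_of_mem_of_not_mem hj hk)]
    have hrest (r : κ → ℕ) (ρ : ℕ) : Tendsto (fun i => 𝔼 ω ∈ S i,
        (W i ω * ∏ j ∈ T, ((X i ω j).choose (r j) : ℝ)) * (X i ω k).choose ρ) l
        (𝓝 ((m * ∏ j ∈ T, lam j ^ r j / (r j).factorial) * (lam k ^ ρ / ρ.factorial))) := by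
      have h := hmoment (Function.update r k ρ)
      have hchoose (i : ι) (ω : Ω i) := hprod r ρ fun j s => ((X i ω j).choose s : ℝ)
      simp only [hprod r ρ fun j s => lam j ^ s / s.factorial, hchoose] at h
      simpa only [mul_assoc, mul_comm (∏ _ ∈ T, _)] using h
    simp only [prod_insert hk, ← mul_assoc]
    refine ih (W := fun i ω => W i ω * if X i ω k = a k then 1 else 0) (fun i ω => ?_) fun r => ?_
    · have := hW i ω
      positivity
    · simpa only [mul_right_comm] using tendsto_expect_mul_ite_eq
        (fun i ω => mul_nonneg (hW i ω) (by positivity)) (hrest r) (a k)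

end FactorialMoments

section EdgeSets

open Finset

variable {V : Type*} [DecidableEq V] {E A B H : Finset (Sym2 V)}

/-- The degree of the vertex `v` in the graph with edge set `E` (a loop counts once). -/
def edgeDegree (E : Finset (Sym2 V)) (v : V) : ℕ := #{e ∈ E | v ∈ e}

theorem edgeDegree_mono (h : A ⊆ B) (v : V) : edgeDegree A v ≤ edgeDegree B v :=
  card_le_card (filter_subset_filter _ h)

theorem edgeDegree_union (h : Disjoint A B) (v : V) :
    edgeDegree (A ∪ B) v = edgeDegree A v + edgeDegree B v := by
  rw [edgeDegree, filter_union, card_union_of_disjoint (disjoint_filter_filter h), edgeDegree,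
    edgeDegree]

theorem edgeDegree_sdiff (h : A ⊆ E) (v : V) :
    edgeDegree (E \ A) v = edgeDegree E v - edgeDegree A v := by
  conv_rhs => rw [← sdiff_union_of_subset h, edgeDegree_union sdiff_disjoint]
  omega

theorem edgeDegree_singleton {a b : V} (hab : a ≠ b) (v : V) :
    edgeDegree {s(a, b)} v = (if v = a then 1 else 0) + if v = b then 1 else 0 := by
  rw [edgeDegree, filter_singleton]
  split_ifs with h h₁ h₂ h₂ <;> simp_all

theorem edgeDegree_insert {e : Sym2 V} (he : e ∉ E) (v : V) :
    edgeDegree (insert e E) v = edgeDegree {e} v + edgeDegree E v := by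
  rw [insert_eq, edgeDegree_union (disjoint_singleton_left.2 he)]

variable [Fintype V]

theorem card_filter_mk_mem (E : Finset (Sym2 V)) (v : V) :
    #{x | s(v, x) ∈ E} = edgeDegree E v := by
  refine card_bij (fun x _ => s(v, x)) ?_ ?_ ?_
  · simp
  · exact fun x _ y _ h => Sym2.congr_right.1 h
  · intro e he
    obtain ⟨he, hv⟩ := mem_filter.1 he
    obtain ⟨x, rfl⟩ := Sym2.mem_iff_exists.1 hv
    exact ⟨x, by simpa using he, rfl⟩

theorem sum_edgeDegree_eq_sum_card_toFinset (E : Finset (Sym2 V)) :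
    ∑ v, edgeDegree E v = ∑ e ∈ E, #e.toFinset := by
  refine (sum_card_bipartiteAbove_eq_sum_card_bipartiteBelow _).trans (sum_congr rfl fun e _ => ?_)
  congr 1
  ext v
  simp [bipartiteBelow]

theorem sum_edgeDegree_le (E : Finset (Sym2 V)) : ∑ v, edgeDegree E v ≤ 2 * #E := by
  rw [sum_edgeDegree_eq_sum_card_toFinset, mul_comm]
  refine sum_le_card_nsmul _ _ _ fun e _ => ?_
  rw [Sym2.card_toFinset]
  split_ifs <;> norm_num

theorem sum_edgeDegree (hE : ∀ e ∈ E, ¬e.IsDiag) : ∑ v, edgeDegree E v = 2 * #E := by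
  rw [sum_edgeDegree_eq_sum_card_toFinset, mul_comm]
  exact sum_const_nat fun e he => Sym2.card_toFinset_of_not_isDiag e (hE e he)

/-- The edges of `E` with an orientation: all ordered pairs of adjacent vertices. -/
def darts (E : Finset (Sym2 V)) : Finset (V × V) := {p | s(p.1, p.2) ∈ E}

theorem mem_darts {p : V × V} : p ∈ darts E ↔ s(p.1, p.2) ∈ E := by
  simp [darts]

theorem card_filter_prod {α β : Type*} [Fintype α] [Fintype β] (P : α × β → Prop)
    [DecidablePred P] : #{q | P q} = ∑ a, #{b | P (a, b)} := by
  simp only [card_filter, Fintype.sum_prod_type]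

theorem card_darts_filter_fst_mem (E : Finset (Sym2 V)) (S : Finset V) :
    #{p ∈ darts E | p.1 ∈ S} = ∑ v ∈ S, edgeDegree E v := by
  rw [darts, filter_filter, card_filter_prod, ← sum_subset (subset_univ S)]
  · refine sum_congr rfl fun v hv => ?_
    simp only [hv, and_true, card_filter_mk_mem]
  · intro v _ hv
    simp only [hv, and_false, filter_false, card_empty]

theorem card_darts_filter_snd_mem (E : Finset (Sym2 V)) (S : Finset V) :
    #{p ∈ darts E | p.2 ∈ S} = ∑ v ∈ S, edgeDegree E v := by
  rw [← card_darts_filter_fst_mem]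
  exact card_equiv (Equiv.prodComm V V) fun p => by simp [mem_darts, Sym2.eq_swap]

theorem card_darts (E : Finset (Sym2 V)) : #(darts E) = ∑ v, edgeDegree E v := by
  simpa using card_darts_filter_fst_mem E univ

/-- The edge sets of the `d`-regular simple graphs on `V`. -/
def regularEdgeSets (V : Type*) [Fintype V] [DecidableEq V] (d : ℕ) : Finset (Finset (Sym2 V)) :=
  {E | (∀ e ∈ E, ¬e.IsDiag) ∧ ∀ v, edgeDegree E v = d}

/-- The edge sets of the `d`-regular simple graphs on `V` that contain all edges in `H`. -/
def regularSupersets (d : ℕ) (H : Finset (Sym2 V)) : Finset (Finset (Sym2 V)) :=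
  {E ∈ regularEdgeSets V d | H ⊆ E}

variable {d : ℕ}

theorem mem_regularEdgeSets :
    E ∈ regularEdgeSets V d ↔ (∀ e ∈ E, ¬e.IsDiag) ∧ ∀ v, edgeDegree E v = d := by
  simp [regularEdgeSets]

theorem mem_regularSupersets :
    E ∈ regularSupersets d H ↔
      ((∀ e ∈ E, ¬e.IsDiag) ∧ ∀ v, edgeDegree E v = d) ∧ H ⊆ E := by
  rw [regularSupersets, mem_filter, mem_regularEdgeSets]

theorem card_darts_of_mem_regularEdgeSets (hE : E ∈ regularEdgeSets V d) :
    #(darts E) = d * Fintype.card V := by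
  rw [card_darts, sum_congr rfl fun v _ => (mem_regularEdgeSets.1 hE).2 v]
  simp [mul_comm]

/-- The closed neighbourhood of the vertex `a` in the graph with edge set `E`. -/
def closedNeighbors (E : Finset (Sym2 V)) (a : V) : Finset V := {x | x = a ∨ s(a, x) ∈ E}

theorem mem_closedNeighbors {a x : V} : x ∈ closedNeighbors E a ↔ x = a ∨ s(a, x) ∈ E := by
  simp [closedNeighbors]

theorem card_closedNeighbors_le (hE : E ∈ regularEdgeSets V d) (a : V) :
    #(closedNeighbors E a) ≤ d + 1 := by
  calc #(closedNeighbors E a)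
    _ ≤ #{x | x = a} + #{x | s(a, x) ∈ E} := by
      rw [closedNeighbors, filter_or]
      exact card_union_le _ _
    _ = d + 1 := by
      rw [card_filter_mk_mem, (mem_regularEdgeSets.1 hE).2, filter_eq', if_pos (mem_univ a),
        card_singleton, add_comm]

/-- The darts of `E` whose edge is not in `K`, whose source is neither equal nor adjacent to `a`,
and whose target is neither equal nor adjacent to `b`. -/
def dartsAvoiding (E K : Finset (Sym2 V)) (a b : V) : Finset (V × V) :=
  {p ∈ darts E | s(p.1, p.2) ∉ K ∧ p.1 ∉ closedNeighbors E a ∧ p.2 ∉ closedNeighbors E b}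

theorem card_sub_le_card_dartsAvoiding (hE : E ∈ regularEdgeSets V d) (K : Finset (Sym2 V))
    (a b : V) :
    d * Fintype.card V - (2 * #K + 2 * ((d + 1) * d)) ≤ #(dartsAvoiding E K a b) := by
  have hcover : darts E ⊆ dartsAvoiding E K a b ∪ (darts K ∪
      ({p ∈ darts E | p.1 ∈ closedNeighbors E a} ∪ {p ∈ darts E | p.2 ∈ closedNeighbors E b})) := by
    intro p hp
    simp only [dartsAvoiding, mem_union, mem_filter, mem_darts] at hp ⊢
    tauto
  have hK : #(darts K) ≤ 2 * #K := (card_darts K).trans_le (sum_edgeDegree_le K)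
  have hnear (c : V) : ∑ v ∈ closedNeighbors E c, edgeDegree E v ≤ (d + 1) * d := by
    rw [sum_const_nat fun v _ => (mem_regularEdgeSets.1 hE).2 v]
    exact Nat.mul_le_mul_right d (card_closedNeighbors_le hE c)
  have ha := (card_darts_filter_fst_mem E _).trans_le (hnear a)
  have hb := (card_darts_filter_snd_mem E _).trans_le (hnear b)
  have htotal := (card_le_card hcover).trans <| (card_union_le _ _).trans <|
    Nat.add_le_add_left ((card_union_le _ _).trans
      (Nat.add_le_add_left (card_union_le _ _) _)) _
  rw [card_darts_of_mem_regularEdgeSets hE] at htotal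
  omega

end EdgeSets

section Switching

open Finset

variable {V : Type*} [DecidableEq V] {d : ℕ} {E A B H : Finset (Sym2 V)} {u v : V}

/-- Replacing the edges `A` by the edges `B` turns the edge set `E` into another simple edge set
with the same degrees, without touching the edges of `H`. -/
def IsSwitch (H E A B : Finset (Sym2 V)) : Prop :=
  (A ⊆ E ∧ Disjoint A H) ∧ Disjoint B E ∧ (∀ e ∈ B, ¬e.IsDiag) ∧
    ∀ v, edgeDegree A v = edgeDegree B v

theorem IsSwitch.sdiff_union_cancel (h : IsSwitch H E A B) : (E \ A ∪ B) \ B ∪ A = E := by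
  rw [union_sdiff_cancel_right (h.2.1.symm.mono_left sdiff_subset), sdiff_union_of_subset h.1.1]

/-- The edges `uv`, `xz`, `yw` removed by the switching with parameter `((x, z), (y, w))`. -/
def removedEdges (u v : V) (q : (V × V) × V × V) : Finset (Sym2 V) :=
  {s(u, v), s(q.1.1, q.1.2), s(q.2.1, q.2.2)}

/-- The edges `ux`, `vy`, `zw` added by the switching with parameter `((x, z), (y, w))`. -/
def addedEdges (u v : V) (q : (V × V) × V × V) : Finset (Sym2 V) :=
  {s(u, q.1.1), s(v, q.2.1), s(q.1.2, q.2.2)}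

theorem edgeDegree_removedEdges {q : (V × V) × V × V}
    (hremoved : ∀ e ∈ removedEdges u v q, ¬e.IsDiag) (hadded : ∀ e ∈ addedEdges u v q, ¬e.IsDiag)
    (hdisj : Disjoint (removedEdges u v q) (addedEdges u v q)) (t : V) :
    edgeDegree (removedEdges u v q) t = edgeDegree (addedEdges u v q) t := by
  obtain ⟨⟨x, z⟩, y, w⟩ := q
  simp only [removedEdges, addedEdges, mem_insert, mem_singleton, forall_eq_or_imp, forall_eq,
    Sym2.mk_isDiag_iff, disjoint_left, not_or] at hremoved hadded hdisj ⊢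
  have huv : s(u, v) ∉ ({s(x, z), s(y, w)} : Finset (Sym2 V)) := by
    simp only [mem_insert, mem_singleton, Sym2.eq_iff]
    rintro ((⟨rfl, rfl⟩ | ⟨rfl, rfl⟩) | ⟨rfl, rfl⟩ | ⟨rfl, rfl⟩) <;> simp_all [Sym2.eq_swap]
  have hxz : s(x, z) ∉ ({s(y, w)} : Finset (Sym2 V)) := by
    simp only [mem_singleton, Sym2.eq_iff]
    rintro (⟨rfl, rfl⟩ | ⟨rfl, rfl⟩) <;> simp_all [Sym2.eq_swap]
  have hux : s(u, x) ∉ ({s(v, y), s(z, w)} : Finset (Sym2 V)) := by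
    simp only [mem_insert, mem_singleton, Sym2.eq_iff]
    rintro ((⟨rfl, rfl⟩ | ⟨rfl, rfl⟩) | ⟨rfl, rfl⟩ | ⟨rfl, rfl⟩) <;> simp_all [Sym2.eq_swap]
  have hvy : s(v, y) ∉ ({s(z, w)} : Finset (Sym2 V)) := by
    simp only [mem_singleton, Sym2.eq_iff]
    rintro (⟨rfl, rfl⟩ | ⟨rfl, rfl⟩) <;> simp_all [Sym2.eq_swap]
  rw [edgeDegree_insert huv, edgeDegree_insert hxz, edgeDegree_insert hux, edgeDegree_insert hvy]
  obtain ⟨⟨huv, hxz, hyw⟩, hux, hvy, hzw⟩ := And.intro hremoved hadded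
  simp only [edgeDegree_singleton, huv, hxz, hyw, hux, hvy, hzw, ne_eq, not_false_eq_true]
  ring

variable [Fintype V]

instance : Decidable (IsSwitch H E A B) := inferInstanceAs (Decidable (_ ∧ _))

theorem IsSwitch.mem_regularSupersets (h : IsSwitch H E A B) (hE : E ∈ regularSupersets d H) :
    E \ A ∪ B ∈ regularSupersets d H := by
  obtain ⟨⟨hAE, hAH⟩, hBE, hB, hdeg⟩ := h
  obtain ⟨⟨hloop, hreg⟩, hHE⟩ := RandomRegular.mem_regularSupersets.1 hE
  refine RandomRegular.mem_regularSupersets.2 ⟨⟨fun e he => ?_, fun v => ?_⟩, ?_⟩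
  · exact (mem_union.1 he).elim (fun he => hloop e (sdiff_subset he)) (hB e)
  · rw [edgeDegree_union (hBE.symm.mono_left sdiff_subset), edgeDegree_sdiff hAE, ← hdeg,
      Nat.sub_add_cancel (edgeDegree_mono hAE v), hreg]
  · exact (subset_sdiff.2 ⟨hHE, hAH.symm⟩).trans subset_union_left

theorem IsSwitch.symm (h : IsSwitch H E A B) (hE : E ∈ regularSupersets d H) :
    IsSwitch H (E \ A ∪ B) B A := by
  obtain ⟨⟨hAE, -⟩, hBE, -, hdeg⟩ := h
  obtain ⟨⟨hloop, -⟩, hHE⟩ := RandomRegular.mem_regularSupersets.1 hE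
  exact ⟨⟨subset_union_right, hBE.mono_right hHE⟩,
    disjoint_union_right.2 ⟨disjoint_sdiff, (hBE.mono_right hAE).symm⟩,
    fun e he => hloop e (hAE he), fun v => (hdeg v).symm⟩

theorem card_filter_isSwitch_comm (d : ℕ) (H A B : Finset (Sym2 V)) :
    #{E ∈ regularSupersets d H | IsSwitch H E A B}
      = #{E ∈ regularSupersets d H | IsSwitch H E B A} := by
  refine card_nbij' (fun E => E \ A ∪ B) (fun E => E \ B ∪ A) ?_ ?_ ?_ ?_ <;>
  · intro E hE
    obtain ⟨hE, hswitch⟩ := mem_filter.1 hE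
    first
    | exact hswitch.sdiff_union_cancel
    | exact mem_filter.2 ⟨hswitch.mem_regularSupersets hE, hswitch.symm hE⟩

/-- The parameters of the switchings that remove the edge `uv` from `E`. -/
def forwardSwitches (H E : Finset (Sym2 V)) (u v : V) : Finset ((V × V) × V × V) :=
  {q | IsSwitch H E (removedEdges u v q) (addedEdges u v q)}

/-- The parameters of the reversed switchings, which add the edge `uv` to `E`. -/
def backwardSwitches (H E : Finset (Sym2 V)) (u v : V) : Finset ((V × V) × V × V) :=
  {q | IsSwitch H E (addedEdges u v q) (removedEdges u v q)}

theorem sum_card_forwardSwitches_eq (d : ℕ) (H : Finset (Sym2 V)) (u v : V) :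
    ∑ E ∈ regularSupersets d H, #(forwardSwitches H E u v)
      = ∑ E ∈ regularSupersets d H, #(backwardSwitches H E u v) := by
  refine (sum_card_bipartiteAbove_eq_sum_card_bipartiteBelow _).trans <| Eq.trans
    (sum_congr rfl fun q _ => card_filter_isSwitch_comm d H _ _)
    (sum_card_bipartiteAbove_eq_sum_card_bipartiteBelow _).symm

theorem forwardSwitches_eq_empty (huv : s(u, v) ∉ E) : forwardSwitches H E u v = ∅ :=
  filter_eq_empty_iff.2 fun _ _ h => huv (h.1.1 (mem_insert_self _ _))

theorem card_forwardSwitches_le (hE : E ∈ regularEdgeSets V d) :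
    #(forwardSwitches H E u v) ≤ (d * Fintype.card V) ^ 2 := by
  rw [← card_darts_of_mem_regularEdgeSets hE, sq, ← card_product]
  refine card_le_card fun q hq => mem_product.2 ?_
  have hq := (mem_filter.1 hq).2.1.1
  exact ⟨mem_darts.2 (hq (by simp [removedEdges])), mem_darts.2 (hq (by simp [removedEdges]))⟩

theorem card_filter_mk_mem_sdiff (hE : E ∈ regularSupersets d H) (v : V) :
    #{x | s(v, x) ∈ E \ H} = d - edgeDegree H v := by
  obtain ⟨⟨-, hreg⟩, hHE⟩ := mem_regularSupersets.1 hE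
  rw [card_filter_mk_mem, edgeDegree_sdiff hHE, hreg]

theorem card_backwardSwitches_le (hE : E ∈ regularSupersets d H) :
    #(backwardSwitches H E u v)
      ≤ (d - edgeDegree H u) * (d - edgeDegree H v) * (d * Fintype.card V) := by
  rw [← card_filter_mk_mem_sdiff hE, ← card_filter_mk_mem_sdiff hE,
    ← card_darts_of_mem_regularEdgeSets (mem_filter.1 hE).1, ← card_product, ← card_product]
  refine card_le_card_of_injOn (Equiv.prodProdProdComm V V V V) (fun q hq => ?_)
    (Equiv.injective _).injOn
  obtain ⟨⟨hsub, hdisj⟩, -⟩ := (mem_filter.1 hq).2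
  have hmem {e} (he : e ∈ addedEdges u v q) : e ∈ E \ H :=
    mem_sdiff.2 ⟨hsub he, disjoint_left.1 hdisj he⟩
  simp only [Equiv.prodProdProdComm_apply, coe_product, Set.mem_prod, mem_coe, mem_filter,
    mem_univ, true_and, mem_darts]
  exact ⟨⟨hmem (by simp [addedEdges]), hmem (by simp [addedEdges])⟩,
    (mem_sdiff.1 (hmem (by simp [addedEdges]))).1⟩

theorem card_mul_le_card_filter {α β : Type*} [Fintype α] [Fintype β] {S : Finset α} {m : ℕ}
    (P : α × β → Prop) [DecidablePred P] (h : ∀ a ∈ S, m ≤ #{b | P (a, b)}) :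
    #S * m ≤ #{q | P q} := by
  rw [card_filter_prod, ← smul_eq_mul]
  exact (card_nsmul_le_sum S _ m h).trans (sum_le_univ_sum_of_nonneg fun _ => Nat.zero_le _)

theorem mem_forwardSwitches_of_subset (hE : E ∈ regularSupersets d H) {q : (V × V) × V × V}
    (hremoved : removedEdges u v q ⊆ E \ H) (hadded : Disjoint (addedEdges u v q) E)
    (hloop : ∀ e ∈ addedEdges u v q, ¬e.IsDiag) : q ∈ forwardSwitches H E u v := by
  obtain ⟨hsub, hdisj⟩ := subset_sdiff.1 hremoved
  exact mem_filter.2 ⟨mem_univ q, ⟨hsub, hdisj⟩, hadded, hloop, edgeDegree_removedEdges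
    (fun e he => (mem_regularSupersets.1 hE).1.1 e (hsub he)) hloop (hadded.mono_right hsub).symm⟩

theorem mem_backwardSwitches_of_subset (hE : E ∈ regularSupersets d H) {q : (V × V) × V × V}
    (hadded : addedEdges u v q ⊆ E \ H) (hremoved : Disjoint (removedEdges u v q) E)
    (hloop : ∀ e ∈ removedEdges u v q, ¬e.IsDiag) : q ∈ backwardSwitches H E u v := by
  obtain ⟨hsub, hdisj⟩ := subset_sdiff.1 hadded
  exact mem_filter.2 ⟨mem_univ q, ⟨hsub, hdisj⟩, hremoved, hloop, fun t =>
    (edgeDegree_removedEdges hloop (fun e he => (mem_regularSupersets.1 hE).1.1 e (hsub he))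
      (hremoved.mono_right hsub) t).symm⟩

/-- A bound for the number of darts of a `d`-regular graph that are lost to the constraints on one
dart of a switching that preserves `k` edges. -/
def switchLoss (d k : ℕ) : ℕ := 2 * (k + 2) + 2 * ((d + 1) * d)

theorem sub_switchLoss_le_card_dartsAvoiding (hE : E ∈ regularEdgeSets V d) {K : Finset (Sym2 V)}
    (hK : #K ≤ #H + 2) (a b : V) :
    d * Fintype.card V - switchLoss d #H ≤ #(dartsAvoiding E K a b) := by
  refine le_trans ?_ (card_sub_le_card_dartsAvoiding hE K a b)
  unfold switchLoss
  gcongr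

theorem le_card_forwardSwitches (hE : E ∈ regularSupersets d H) (huv : s(u, v) ∈ E \ H) :
    (d * Fintype.card V - switchLoss d #H) ^ 2 ≤ #(forwardSwitches H E u v) := by
  have hreg : E ∈ regularEdgeSets V d := (mem_filter.1 hE).1
  have hfst := sub_switchLoss_le_card_dartsAvoiding (H := H) hreg
    ((card_insert_le s(u, v) H).trans (Nat.le_succ _)) u u
  rw [sq]
  refine (Nat.mul_le_mul_right _ hfst).trans (card_mul_le_card_filter _ fun p hp => ?_)
  refine (sub_switchLoss_le_card_dartsAvoiding (H := H) hreg ((card_insert_le s(p.1, p.2) _).trans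
    (Nat.succ_le_succ (card_insert_le s(u, v) H))) v p.2).trans (card_le_card fun p' hp' => ?_)
  simp only [dartsAvoiding, mem_filter, mem_darts, mem_closedNeighbors, mem_insert, not_or]
    at hp hp'
  obtain ⟨hxz, ⟨-, hxzH⟩, ⟨hxu, hux⟩, -⟩ := hp
  obtain ⟨hyw, ⟨-, -, hywH⟩, ⟨hyv, hvy⟩, hwz, hzw⟩ := hp'
  refine mem_filter.2 ⟨mem_univ _, (mem_filter.1 (mem_forwardSwitches_of_subset hE ?_ ?_ ?_)).2⟩
  · simp only [removedEdges, insert_subset_iff, singleton_subset_iff, Finset.mem_sdiff]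
    exact ⟨Finset.mem_sdiff.1 huv, ⟨hxz, hxzH⟩, hyw, hywH⟩
  · simp only [addedEdges, disjoint_insert_left, disjoint_singleton_left]
    exact ⟨hux, hvy, hzw⟩
  · simp only [addedEdges, mem_insert, mem_singleton, forall_eq_or_imp, forall_eq,
      Sym2.mk_isDiag_iff]
    exact ⟨Ne.symm hxu, Ne.symm hyv, Ne.symm hwz⟩

theorem le_card_backwardSwitches (hE : E ∈ regularSupersets d H) (hne : u ≠ v)
    (huv : s(u, v) ∉ E) :
    (d - edgeDegree H u) * (d - edgeDegree H v) * (d * Fintype.card V - switchLoss d #H)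
      ≤ #(backwardSwitches H E u v) := by
  have hreg : E ∈ regularEdgeSets V d := (mem_filter.1 hE).1
  rw [← card_filter_mk_mem_sdiff hE, ← card_filter_mk_mem_sdiff hE, ← card_product]
  have hcount : #(backwardSwitches H E u v)
      = #{r : (V × V) × V × V | Equiv.prodProdProdComm V V V V r ∈ backwardSwitches H E u v} :=
    card_equiv (Equiv.prodProdProdComm V V V V) fun q => by simp
  rw [hcount]
  refine card_mul_le_card_filter _ fun p hp => ?_
  refine (sub_switchLoss_le_card_dartsAvoiding (H := H) hreg
    ((card_insert_le s(u, p.1) _).trans (Nat.succ_le_succ (card_insert_le s(v, p.2) H)))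
    p.1 p.2).trans (card_le_card fun p' hp' => ?_)
  simp only [dartsAvoiding, mem_product, mem_filter, mem_univ, true_and, mem_darts,
    Finset.mem_sdiff, mem_closedNeighbors, mem_insert, not_or] at hp hp'
  obtain ⟨hzw, ⟨-, -, hzwH⟩, ⟨hzx, hxz⟩, hwy, hyw⟩ := hp'
  refine mem_filter.2 ⟨mem_univ _, mem_backwardSwitches_of_subset hE ?_ ?_ ?_⟩
  · simp only [addedEdges, insert_subset_iff, singleton_subset_iff, Finset.mem_sdiff]
    exact ⟨hp.1, hp.2, hzw, hzwH⟩
  · simp only [removedEdges, disjoint_insert_left, disjoint_singleton_left]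
    exact ⟨huv, hxz, hyw⟩
  · simp only [removedEdges, mem_insert, mem_singleton, forall_eq_or_imp, forall_eq,
      Sym2.mk_isDiag_iff]
    exact ⟨hne, Ne.symm hzx, Ne.symm hwy⟩

theorem filter_regularSupersets_mem (d : ℕ) (H : Finset (Sym2 V)) (e : Sym2 V) :
    {E ∈ regularSupersets d H | e ∈ E} = regularSupersets d (insert e H) := by
  simp only [regularSupersets, filter_filter, insert_subset_iff, and_comm]

theorem card_regularSupersets_insert_le (d : ℕ) (H : Finset (Sym2 V)) (e : Sym2 V) :
    #(regularSupersets d (insert e H)) ≤ #(regularSupersets d H) := by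
  rw [← filter_regularSupersets_mem]
  exact card_filter_le _ _

theorem card_regularSupersets_insert_mul_le (d : ℕ) (huv : s(u, v) ∉ H) :
    #(regularSupersets d (insert s(u, v) H)) * (d * Fintype.card V - switchLoss d #H) ^ 2
      ≤ #(regularSupersets d H)
        * ((d - edgeDegree H u) * (d - edgeDegree H v) * (d * Fintype.card V)) := by
  rw [← filter_regularSupersets_mem]
  calc _ ≤ ∑ E ∈ regularSupersets d H with s(u, v) ∈ E, #(forwardSwitches H E u v) :=
        card_nsmul_le_sum _ _ _ fun E hE => le_card_forwardSwitches (mem_filter.1 hE).1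
          (Finset.mem_sdiff.2 ⟨(mem_filter.1 hE).2, huv⟩)
    _ ≤ ∑ E ∈ regularSupersets d H, #(forwardSwitches H E u v) :=
        sum_le_sum_of_subset (filter_subset _ _)
    _ = ∑ E ∈ regularSupersets d H, #(backwardSwitches H E u v) := sum_card_forwardSwitches_eq ..
    _ ≤ _ := sum_le_card_nsmul _ _ _ fun E hE => card_backwardSwitches_le hE

theorem card_sub_card_regularSupersets_insert_mul_le (d : ℕ) (H : Finset (Sym2 V)) (hne : u ≠ v) :
    (#(regularSupersets d H) - #(regularSupersets d (insert s(u, v) H)))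
        * ((d - edgeDegree H u) * (d - edgeDegree H v) * (d * Fintype.card V - switchLoss d #H))
      ≤ #(regularSupersets d (insert s(u, v) H)) * (d * Fintype.card V) ^ 2 := by
  have hcard := card_filter_add_card_filter_not (s := regularSupersets d H) (s(u, v) ∈ ·)
  rw [← filter_regularSupersets_mem, ← hcard, Nat.add_sub_cancel_left]
  calc _ ≤ ∑ E ∈ regularSupersets d H with s(u, v) ∉ E, #(backwardSwitches H E u v) :=
        card_nsmul_le_sum _ _ _ fun E hE =>
          le_card_backwardSwitches (mem_filter.1 hE).1 hne (mem_filter.1 hE).2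
    _ ≤ ∑ E ∈ regularSupersets d H, #(backwardSwitches H E u v) :=
        sum_le_sum_of_subset (filter_subset _ _)
    _ = ∑ E ∈ regularSupersets d H, #(forwardSwitches H E u v) :=
        (sum_card_forwardSwitches_eq ..).symm
    _ = ∑ E ∈ regularSupersets d H with s(u, v) ∈ E, #(forwardSwitches H E u v) := by
        refine (sum_filter_of_ne fun E _ hE => ?_).symm
        contrapose! hE
        rw [forwardSwitches_eq_empty hE, card_empty]
    _ ≤ _ := sum_le_card_nsmul _ _ _ fun E hE =>
        card_forwardSwitches_le (mem_filter.1 (mem_filter.1 hE).1).1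

end Switching

section Asymptotics

open Finset

variable {V : Type*} [Fintype V] [DecidableEq V] {d : ℕ} {H : Finset (Sym2 V)} {u v : V}

/-- The probability that the edge set of a uniformly random `d`-regular graph on `V` contains all
edges in `H` (zero when there is no `d`-regular graph on `V`). -/
noncomputable def containProb (d : ℕ) (H : Finset (Sym2 V)) : ℝ :=
  #(regularSupersets d H) / #(regularEdgeSets V d)

theorem containProb_nonneg (d : ℕ) (H : Finset (Sym2 V)) : 0 ≤ containProb d H := by
  unfold containProb
  positivity

theorem containProb_empty (hne : (regularEdgeSets V d).Nonempty) :
    containProb d (∅ : Finset (Sym2 V)) = 1 := by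
  have : (#(regularEdgeSets V d) : ℝ) ≠ 0 := by exact_mod_cast hne.card_pos.ne'
  simp [containProb, regularSupersets, this]

theorem containProb_insert_le (d : ℕ) (H : Finset (Sym2 V)) (e : Sym2 V) :
    containProb d (insert e H) ≤ containProb d H := by
  unfold containProb
  have := card_regularSupersets_insert_le d H e
  gcongr ?_ / _
  exact_mod_cast this

theorem containProb_insert_mul_le (d : ℕ) (huv : s(u, v) ∉ H) :
    containProb d (insert s(u, v) H) * (d * Fintype.card V)
      ≤ ((d - edgeDegree H u) * (d - edgeDegree H v) : ℕ) * containProb d H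
        + 2 * switchLoss d #H * containProb d (insert s(u, v) H) := by
  set D : ℕ := (d - edgeDegree H u) * (d - edgeDegree H v)
  set c : ℕ := switchLoss d #H
  set x : ℕ := d * Fintype.card V
  set N : ℕ := #(regularSupersets d H)
  set N' : ℕ := #(regularSupersets d (insert s(u, v) H))
  have hswitch : N' * (x - c) ^ 2 ≤ N * (D * x) := card_regularSupersets_insert_mul_le d huv
  have hcount : (N' * x : ℝ) ≤ D * N + 2 * c * N' := by
    rcases le_or_gt x c with hxc | hcx
    · have : N' * x ≤ D * N + 2 * c * N' := by nlinarith
      exact_mod_cast this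
    · have hx : (0 : ℝ) < x := by exact_mod_cast hcx.pos
      refine le_of_mul_le_mul_right ?_ hx
      rify [hcx.le] at hswitch
      nlinarith [mul_nonneg N'.cast_nonneg (sq_nonneg (c : ℝ))]
  calc containProb d (insert s(u, v) H) * (d * Fintype.card V)
      = N' * x / #(regularEdgeSets V d) := by
        simp only [containProb, N', x]
        push_cast
        ring
    _ ≤ (D * N + 2 * c * N') / #(regularEdgeSets V d) := by gcongr
    _ = _ := by
        simp only [containProb, N, N']
        ring

theorem mul_containProb_mul_le (d : ℕ) (H : Finset (Sym2 V)) (hne : u ≠ v) :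
    ((d - edgeDegree H u) * (d - edgeDegree H v) : ℕ) * containProb d H * (d * Fintype.card V)
      ≤ containProb d (insert s(u, v) H) * (d * Fintype.card V) ^ 2
        + ((d - edgeDegree H u) * (d - edgeDegree H v) : ℕ) * (switchLoss d #H * containProb d H
          + containProb d (insert s(u, v) H) * (d * Fintype.card V)) := by
  set D : ℕ := (d - edgeDegree H u) * (d - edgeDegree H v)
  set c : ℕ := switchLoss d #H
  set x : ℕ := d * Fintype.card V
  set N : ℕ := #(regularSupersets d H)
  set N' : ℕ := #(regularSupersets d (insert s(u, v) H))
  have hswitch : (N - N') * (D * (x - c)) ≤ N' * x ^ 2 :=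
    card_sub_card_regularSupersets_insert_mul_le d H hne
  have hcount : D * N * x ≤ N' * x ^ 2 + D * (c * N + N' * x) := by
    calc D * N * x ≤ D * ((N - N') + N') * (x - c) + D * N * c := by
          rw [Nat.sub_add_cancel (card_regularSupersets_insert_le d H _)]
          nlinarith [Nat.mul_le_mul_left (D * N) (le_tsub_add : x ≤ x - c + c)]
      _ ≤ N' * x ^ 2 + D * (c * N + N' * x) := by
          nlinarith [Nat.mul_le_mul_left (D * N') (Nat.sub_le x c)]
  calc D * containProb d H * (d * Fintype.card V)
      = (D * N * x : ℕ) / #(regularEdgeSets V d) := by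
        simp only [containProb, N, x]
        push_cast
        ring
    _ ≤ (N' * x ^ 2 + D * (c * N + N' * x) : ℕ) / #(regularEdgeSets V d) := by gcongr
    _ = _ := by
        simp only [containProb, N, N', x]
        push_cast
        ring

/-- A constant `K` such that, given that `k` prescribed edges are present, any further edge is
present with probability at most `K / (d * n)`. -/
def extensionBound (d k : ℕ) : ℕ := d ^ 2 + 2 * switchLoss d k

theorem tsub_mul_tsub_le_sq (d a b : ℕ) : (d - a) * (d - b) ≤ d ^ 2 := by
  rw [sq]
  exact Nat.mul_le_mul (Nat.sub_le _ _) (Nat.sub_le _ _)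

theorem containProb_insert_mul_le_extensionBound (d : ℕ) {e : Sym2 V} (he : e ∉ H) :
    containProb d (insert e H) * (d * Fintype.card V) ≤ extensionBound d #H * containProb d H := by
  induction e with | _ u v
  calc _ ≤ ((d - edgeDegree H u) * (d - edgeDegree H v) : ℕ) * containProb d H
        + 2 * switchLoss d #H * containProb d (insert s(u, v) H) := containProb_insert_mul_le d he
    _ ≤ (d ^ 2 : ℕ) * containProb d H + 2 * switchLoss d #H * containProb d H := by
        gcongr
        · exact containProb_nonneg d H
        · exact tsub_mul_tsub_le_sq ..
        · exact containProb_insert_le d H _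
    _ = extensionBound d #H * containProb d H := by
        rw [extensionBound]
        push_cast
        ring

theorem abs_containProb_insert_mul_sub_le (d : ℕ) (hne : u ≠ v) (huv : s(u, v) ∉ H) :
    |containProb d (insert s(u, v) H) * (d * Fintype.card V)
        - ((d - edgeDegree H u) * (d - edgeDegree H v) : ℕ) * containProb d H|
          * (d * Fintype.card V)
      ≤ (2 * switchLoss d #H * extensionBound d #H
          + d ^ 2 * (switchLoss d #H + extensionBound d #H)) * containProb d H := by
  have hupper := containProb_insert_mul_le d huv
  have hlower := mul_containProb_mul_le d H hne
  have hcrude := containProb_insert_mul_le_extensionBound d huv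
  have hP := containProb_nonneg d H
  have hP' := containProb_nonneg d (insert s(u, v) H)
  have hD : (((d - edgeDegree H u) * (d - edgeDegree H v) : ℕ) : ℝ) ≤ (d ^ 2 : ℕ) :=
    Nat.cast_le.2 (tsub_mul_tsub_le_sq ..)
  rw [Nat.cast_pow] at hD
  set D : ℝ := (((d - edgeDegree H u) * (d - edgeDegree H v) : ℕ) : ℝ)
  set c : ℝ := (switchLoss d #H : ℝ)
  set x : ℝ := d * Fintype.card V
  set P := containProb d H
  set P' := containProb d (insert s(u, v) H)
  set B : ℝ := (extensionBound d #H : ℝ)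
  have hx : 0 ≤ x := by positivity
  have : 0 ≤ c := Nat.cast_nonneg _
  have habove : (P' * x - D * P) * x ≤ 2 * c * (B * P) := by
    calc (P' * x - D * P) * x ≤ 2 * c * P' * x := by gcongr; linarith
      _ ≤ 2 * c * (B * P) := by rw [mul_assoc]; gcongr
  have hbelow : (D * P - P' * x) * x ≤ d ^ 2 * (c * P + B * P) := by
    calc (D * P - P' * x) * x ≤ D * (c * P + P' * x) := by linarith
      _ ≤ d ^ 2 * (c * P + B * P) := by gcongr
  have : 0 ≤ 2 * c * (B * P) := by positivity
  have : 0 ≤ d ^ 2 * (c * P + B * P) := by positivity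
  rw [← abs_of_nonneg hx, ← abs_mul, abs_of_nonneg hx, abs_le]
  constructor <;> linarith

theorem prod_descFactorial_edgeDegree_insert (d : ℕ) (hne : u ≠ v) (huv : s(u, v) ∉ H) :
    ∏ w, d.descFactorial (edgeDegree (insert s(u, v) H) w)
      = (d - edgeDegree H u) * (d - edgeDegree H v) * ∏ w, d.descFactorial (edgeDegree H w) := by
  have hfactor (w : V) : d.descFactorial (edgeDegree (insert s(u, v) H) w)
      = (if w = u then d - edgeDegree H w else 1) * (if w = v then d - edgeDegree H w else 1)
        * d.descFactorial (edgeDegree H w) := by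
    rw [edgeDegree_insert huv, edgeDegree_singleton hne]
    split_ifs with hu hv hv
    · exact absurd (hu.symm.trans hv) hne
    all_goals simp [add_comm 1, Nat.descFactorial_succ]
  simp only [hfactor, prod_mul_distrib, prod_ite_eq', mem_univ, if_true]

theorem exists_containProb_mul_pow_le (d k : ℕ) : ∃ C : ℝ, 0 ≤ C ∧
    ∀ (V : Type u) [Fintype V] [DecidableEq V] (H : Finset (Sym2 V)), #H = k →
      containProb d H * (d * Fintype.card V) ^ k ≤ C := by
  induction k with
  | zero =>
    refine ⟨1, zero_le_one, fun V _ _ H _ => ?_⟩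
    rw [pow_zero, mul_one]
    exact div_le_one_of_le₀ (by exact_mod_cast card_filter_le _ _) (by positivity)
  | succ k ih =>
    obtain ⟨C, hC, hbound⟩ := ih
    refine ⟨extensionBound d k * C, by positivity, fun V _ _ H hH => ?_⟩
    obtain ⟨e, H, he, rfl, rfl⟩ := card_eq_succ.1 hH
    calc containProb d (insert e H) * (d * Fintype.card V) ^ (#H + 1)
      _ = containProb d (insert e H) * (d * Fintype.card V) * (d * Fintype.card V) ^ #H := by ring
      _ ≤ extensionBound d #H * containProb d H * (d * Fintype.card V) ^ #H := by
          gcongr ?_ * _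
          exact containProb_insert_mul_le_extensionBound d he
      _ ≤ extensionBound d #H * C := by
          rw [mul_assoc]
          gcongr
          exact hbound V H rfl

theorem abs_mul_pow_succ_sub_mul_le (P P' Q : ℝ) {D x : ℝ} (hD : 0 ≤ D) (hx : 0 ≤ x) (k : ℕ) :
    |P' * x ^ (k + 1) - D * Q| * x
      ≤ |P' * x - D * P| * x * x ^ k + D * (|P * x ^ k - Q| * x) := by
  calc |P' * x ^ (k + 1) - D * Q| * x
    _ = |(P' * x - D * P) * x ^ k + D * (P * x ^ k - Q)| * x := by ring_nf
    _ ≤ (|(P' * x - D * P) * x ^ k| + |D * (P * x ^ k - Q)|) * x := by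
        gcongr
        exact abs_add_le _ _
    _ = _ := by
        rw [abs_mul, abs_mul, abs_of_nonneg (pow_nonneg hx _), abs_of_nonneg hD]
        ring

theorem exists_abs_containProb_mul_pow_sub_le (d k : ℕ) : ∃ C : ℝ, 0 ≤ C ∧
    ∀ (V : Type u) [Fintype V] [DecidableEq V] (H : Finset (Sym2 V)), #H = k →
      (∀ e ∈ H, ¬e.IsDiag) → (regularEdgeSets V d).Nonempty →
      |containProb d H * (d * Fintype.card V) ^ k
        - ∏ w, (d.descFactorial (edgeDegree H w) : ℝ)| * (d * Fintype.card V) ≤ C := by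
  induction k with
  | zero =>
    refine ⟨0, le_rfl, fun V _ _ H hH _ hne => ?_⟩
    rw [card_eq_zero.1 hH, containProb_empty hne]
    simp [edgeDegree]
  | succ k ih =>
    obtain ⟨C, hC, hasymp⟩ := ih
    obtain ⟨C', hC', hcrude⟩ := exists_containProb_mul_pow_le.{u} d k
    set K : ℝ := 2 * switchLoss d k * extensionBound d k
      + d ^ 2 * (switchLoss d k + extensionBound d k)
    refine ⟨K * C' + d ^ 2 * C, by positivity, fun V _ _ H hH hloop hne => ?_⟩
    obtain ⟨e, H, he, rfl, rfl⟩ := card_eq_succ.1 hH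
    induction e with | _ u v
    have huv : u ≠ v := hloop _ (mem_insert_self _ _)
    have hstep := abs_containProb_insert_mul_sub_le d huv he
    have hrest := hasymp V H rfl (fun e he => hloop e (mem_insert_of_mem he)) hne
    have hprod := prod_descFactorial_edgeDegree_insert d huv he
    have hD : (((d - edgeDegree H u) * (d - edgeDegree H v) : ℕ) : ℝ) ≤ (d ^ 2 : ℕ) :=
      Nat.cast_le.2 (tsub_mul_tsub_le_sq ..)
    rw [Nat.cast_pow] at hD
    rw [← Nat.cast_prod, hprod, Nat.cast_mul, Nat.cast_prod]
    set D : ℝ := (((d - edgeDegree H u) * (d - edgeDegree H v) : ℕ) : ℝ)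
    set x : ℝ := d * Fintype.card V
    set P := containProb d H
    set P' := containProb d (insert s(u, v) H)
    set Q : ℝ := ∏ w, (d.descFactorial (edgeDegree H w) : ℝ)
    have hx : 0 ≤ x := by positivity
    calc |P' * x ^ (#H + 1) - D * Q| * x
      _ ≤ |P' * x - D * P| * x * x ^ #H + D * (|P * x ^ #H - Q| * x) :=
          abs_mul_pow_succ_sub_mul_le P P' Q (Nat.cast_nonneg _) hx _
      _ ≤ K * P * x ^ #H + d ^ 2 * C := by gcongr
      _ ≤ K * C' + d ^ 2 * C := by
          rw [mul_assoc]
          gcongr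
          exact hcrude V H rfl

end Asymptotics

section CyclicPatterns

open Finset Function

variable {P V : Type*} [Fintype P] [DecidableEq V] {σ : Equiv.Perm P} {f : P → V}

/-- The edges joining `f t` to `f (σ t)`. The cycles of the permutation `σ` are the abstract
cycles that `f` maps to closed walks: a single sequence of length `ℓ` is the case `t ↦ t + 1` on
`ZMod ℓ`, a tuple of sequences the corresponding permutation of a sigma type. -/
def stepEdges (σ : Equiv.Perm P) (f : P → V) : Finset (Sym2 V) :=
  univ.image fun t => s(f t, f (σ t))

theorem mem_stepEdges {e : Sym2 V} : e ∈ stepEdges σ f ↔ ∃ t, s(f t, f (σ t)) = e := by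
  simp [stepEdges]

theorem mk_mem_stepEdges_self (σ : Equiv.Perm P) (f : P → V) (t : P) :
    s(f t, f (σ t)) ∈ stepEdges σ f :=
  mem_stepEdges.2 ⟨t, rfl⟩

theorem stepEdges_subset_iff {E : Finset (Sym2 V)} :
    stepEdges σ f ⊆ E ↔ ∀ t, s(f t, f (σ t)) ∈ E := by
  simp [stepEdges, subset_iff]

theorem card_stepEdges_le (σ : Equiv.Perm P) (f : P → V) :
    #(stepEdges σ f) ≤ Fintype.card P :=
  card_image_le

theorem mem_range_of_mem_stepEdges {e : Sym2 V} {v : V} (he : e ∈ stepEdges σ f) (hv : v ∈ e) :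
    v ∈ Set.range f := by
  obtain ⟨t, rfl⟩ := mem_stepEdges.1 he
  rcases Sym2.mem_iff.1 hv with rfl | rfl
  exacts [⟨t, rfl⟩, ⟨σ t, rfl⟩]

theorem not_isDiag_of_mem_stepEdges (hf : ∀ t, f t ≠ f (σ t)) {e : Sym2 V}
    (he : e ∈ stepEdges σ f) : ¬e.IsDiag := by
  obtain ⟨t, rfl⟩ := mem_stepEdges.1 he
  simpa using hf t

theorem mk_mem_stepEdges_iff (hf : Injective f) {a : P} {v : V} :
    s(f a, v) ∈ stepEdges σ f ↔ v = f (σ a) ∨ v = f (σ.symm a) := by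
  rw [mem_stepEdges]
  constructor
  · rintro ⟨t, ht⟩
    rcases Sym2.eq_iff.1 ht with ⟨hta, rfl⟩ | ⟨rfl, hta⟩
    · exact .inl (by rw [hf hta])
    · exact .inr (by rw [← hf hta, σ.symm_apply_apply])
  · rintro (rfl | rfl)
    · exact ⟨a, rfl⟩
    · exact ⟨σ.symm a, by rw [σ.apply_symm_apply, Sym2.eq_swap]⟩

theorem edgeDegree_stepEdges_eq_zero {v : V} (hv : v ∉ Set.range f) :
    edgeDegree (stepEdges σ f) v = 0 :=
  card_eq_zero.2 <| filter_eq_empty_iff.2 fun _ he hve => hv (mem_range_of_mem_stepEdges he hve)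

theorem card_stepEdges (hf : Injective f) (hσ : ∀ t, σ (σ t) ≠ t) :
    #(stepEdges σ f) = Fintype.card P := by
  refine card_image_of_injective _ fun a b hab => ?_
  rcases Sym2.eq_iff.1 hab with ⟨h, -⟩ | ⟨h, h'⟩
  · exact hf h
  · exact absurd (by rw [← hf h, hf h']) (hσ b)

theorem edgeDegree_stepEdges (hf : Injective f) (hσ : ∀ t, σ (σ t) ≠ t) (a : P) :
    edgeDegree (stepEdges σ f) (f a) = 2 := by
  have hne : s(f a, f (σ a)) ≠ s(f a, f (σ.symm a)) := fun h =>
    hσ (σ.symm a) (by rw [σ.apply_symm_apply, hf (Sym2.congr_right.1 h)])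
  rw [edgeDegree, ← card_pair hne]
  congr 1
  ext e
  rw [mem_filter, mem_insert, mem_singleton]
  constructor
  · rintro ⟨he, ha⟩
    obtain ⟨v, rfl⟩ := Sym2.mem_iff_exists.1 ha
    rwa [Sym2.congr_right, Sym2.congr_right, ← mk_mem_stepEdges_iff hf]
  · rintro (rfl | rfl) <;> simp [mk_mem_stepEdges_iff hf]

theorem prod_descFactorial_edgeDegree_stepEdges [Fintype V] (d : ℕ) (hf : Injective f)
    (hσ : ∀ t, σ (σ t) ≠ t) :
    ∏ v, d.descFactorial (edgeDegree (stepEdges σ f) v) = (d * (d - 1)) ^ Fintype.card P := by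
  calc ∏ v, d.descFactorial (edgeDegree (stepEdges σ f) v)
    _ = ∏ t, d.descFactorial (edgeDegree (stepEdges σ f) (f t)) := by
      refine (Fintype.prod_of_injective f hf _ _ (fun v hv => ?_) fun _ => rfl).symm
      rw [edgeDegree_stepEdges_eq_zero hv, Nat.descFactorial_zero]
    _ = (d * (d - 1)) ^ Fintype.card P := by
      simp [edgeDegree_stepEdges hf hσ, Nat.descFactorial_succ, mul_comm]

end CyclicPatterns

section Cycles

open Finset Function

variable {V : Type*} {ℓ m : ℕ}

theorem add_one_add_one_ne (hℓ : 3 ≤ ℓ) (t : ZMod ℓ) : t + 1 + 1 ≠ t := by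
  rw [add_assoc, Ne, add_eq_left, ← Nat.cast_one, ← Nat.cast_add, ZMod.natCast_eq_zero_iff]
  exact Nat.not_dvd_of_pos_of_lt two_pos hℓ

theorem forall_zmod_of_forall_add_one [NeZero ℓ] {p : ZMod ℓ → Prop} {a : ZMod ℓ} (ha : p a)
    (hstep : ∀ t, p t → p (t + 1)) (t : ZMod ℓ) : p t := by
  have hadd (k : ℕ) : p (a + k) := by
    induction k with
    | zero => simpa using ha
    | succ k ih => simpa [add_assoc] using hstep _ ih
  simpa using hadd (t - a).val

/-- The closed walk `f` started from the position `q.1` and traversed in the direction `q.2`. -/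
def retrace (f : ZMod ℓ → V) (q : ZMod ℓ × ℤˣ) : ZMod ℓ → V := fun t => f (q.1 + q.2 • t)

theorem injective_retrace {f : ZMod ℓ → V} (hf : Injective f) (q : ZMod ℓ × ℤˣ) :
    Injective (retrace f q) :=
  hf.comp <| (add_right_injective q.1).comp <| MulAction.injective q.2

theorem retrace_injective (hℓ : 3 ≤ ℓ) {f : ZMod ℓ → V} (hf : Injective f) :
    Injective (retrace f) := by
  rintro ⟨j, ε⟩ ⟨j', ε'⟩ h
  have hzero := hf (congrFun h 0)
  obtain rfl : j = j' := by simpa using hzero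
  have hone : ε • (1 : ZMod ℓ) = ε' • 1 := add_left_cancel (hf (congrFun h 1))
  have hne : (1 : ZMod ℓ) ≠ -1 := fun h =>
    add_one_add_one_ne hℓ (-1) (by rw [neg_add_cancel, zero_add, ← h])
  rcases Int.units_eq_one_or ε with rfl | rfl <;> rcases Int.units_eq_one_or ε' with rfl | rfl <;>
    simp_all [eq_comm]

variable [DecidableEq V] [NeZero ℓ] [NeZero m]

/-- The edges of the closed walk visiting the vertices `f 0, f 1, …, f (ℓ - 1)` in turn. -/
def cycleEdges (f : ZMod ℓ → V) : Finset (Sym2 V) := stepEdges (Equiv.addRight 1) f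

theorem card_cycleEdges (hℓ : 3 ≤ ℓ) {f : ZMod ℓ → V} (hf : Injective f) :
    #(cycleEdges f) = ℓ :=
  (card_stepEdges hf (add_one_add_one_ne hℓ)).trans (ZMod.card ℓ)

theorem mk_mem_cycleEdges_self (f : ZMod ℓ → V) (t : ZMod ℓ) :
    s(f t, f (t + 1)) ∈ cycleEdges f :=
  mk_mem_stepEdges_self (Equiv.addRight 1) f t

theorem cycleEdges_subset_iff {f : ZMod ℓ → V} {E : Finset (Sym2 V)} :
    cycleEdges f ⊆ E ↔ ∀ t, s(f t, f (t + 1)) ∈ E :=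
  stepEdges_subset_iff

theorem mk_mem_cycleEdges_iff {f : ZMod ℓ → V} (hf : Injective f) {a : ZMod ℓ} {v : V} :
    s(f a, v) ∈ cycleEdges f ↔ v = f (a + 1) ∨ v = f (a - 1) := by
  rw [sub_eq_add_neg]
  exact mk_mem_stepEdges_iff hf

theorem mem_of_edgeDegree_le {E H : Finset (Sym2 V)} {v : V} (hEH : E ⊆ H)
    (hdeg : edgeDegree H v ≤ edgeDegree E v) {e : Sym2 V} (he : e ∈ H) (hv : v ∈ e) : e ∈ E :=
  (mem_filter.1 <| (eq_of_subset_of_card_le (filter_subset_filter _ hEH) hdeg).ge <|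
    mem_filter.2 ⟨he, hv⟩).1

theorem cycleEdges_subset_of_apply_eq {H : Finset (Sym2 V)}
    (hH : ∀ v, edgeDegree H v ≤ 2) (hm : 3 ≤ m) {f : ZMod ℓ → V} {g : ZMod m → V}
    (hf : cycleEdges f ⊆ H) (hg : Injective g) (hgH : cycleEdges g ⊆ H) {a : ZMod ℓ} {b : ZMod m}
    (hab : f a = g b) : cycleEdges f ⊆ cycleEdges g := by
  have hclosed {t : ZMod ℓ} (ht : f t ∈ Set.range g) : s(f t, f (t + 1)) ∈ cycleEdges g := by
    refine mem_of_edgeDegree_le hgH ?_ (cycleEdges_subset_iff.1 hf t) (Sym2.mem_mk_left _ _)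
    obtain ⟨c, hc⟩ := ht
    exact (hH _).trans_eq (hc ▸ (edgeDegree_stepEdges hg (add_one_add_one_ne hm) c).symm)
  have hrange : ∀ t, f t ∈ Set.range g := forall_zmod_of_forall_add_one ⟨b, hab.symm⟩
    fun t ht => mem_range_of_mem_stepEdges (hclosed ht) (Sym2.mem_mk_right _ _)
  exact cycleEdges_subset_iff.2 fun t => hclosed (hrange t)

theorem cycleEdges_eq_of_apply_eq {H : Finset (Sym2 V)}
    (hH : ∀ v, edgeDegree H v ≤ 2) (hℓ : 3 ≤ ℓ) (hm : 3 ≤ m) {f : ZMod ℓ → V} {g : ZMod m → V}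
    (hf : Injective f) (hfH : cycleEdges f ⊆ H) (hg : Injective g) (hgH : cycleEdges g ⊆ H)
    {a : ZMod ℓ} {b : ZMod m} (hab : f a = g b) : cycleEdges f = cycleEdges g :=
  (cycleEdges_subset_of_apply_eq hH hm hfH hg hgH hab).antisymm
    (cycleEdges_subset_of_apply_eq hH hℓ hgH hf hfH hab.symm)

theorem cycleEdges_retrace_subset (f : ZMod ℓ → V) (q : ZMod ℓ × ℤˣ) :
    cycleEdges (retrace f q) ⊆ cycleEdges f := by
  refine cycleEdges_subset_iff.2 fun t => ?_
  obtain ⟨j, ε⟩ := q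
  rcases Int.units_eq_one_or ε with rfl | rfl
  · simpa [retrace, add_assoc] using mk_mem_cycleEdges_self f (j + t)
  · have hback := mk_mem_cycleEdges_self f (j - (t + 1))
    rw [show j - (t + 1) + 1 = j - t by ring, Sym2.eq_swap] at hback
    simpa [retrace, sub_eq_add_neg, add_comm (-t)] using hback

theorem exists_retrace_eq {f g : ZMod ℓ → V} (hℓ : 3 ≤ ℓ) (hf : Injective f) (hg : Injective g)
    (h : cycleEdges g ⊆ cycleEdges f) : ∃ q, retrace f q = g := by
  have hstep := cycleEdges_subset_iff.1 h
  obtain ⟨j, hj⟩ : g 0 ∈ Set.range f := mem_range_of_mem_stepEdges (hstep 0) (Sym2.mem_mk_left _ _)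
  obtain ⟨ε, hε⟩ : ∃ ε : ℤˣ, g 1 = f (j + ε • 1) := by
    have hnext := hstep 0
    rw [← hj, mk_mem_cycleEdges_iff hf, zero_add] at hnext
    exact hnext.elim (fun h => ⟨1, by simpa using h⟩)
      fun h => ⟨-1, by simpa [sub_eq_add_neg] using h⟩
  have hboth (t : ZMod ℓ) : g t = f (j + ε • t) ∧ g (t + 1) = f (j + ε • (t + 1)) := by
    revert t
    refine forall_zmod_of_forall_add_one (a := 0) (by simp [hj, hε]) fun t ⟨ht, ht'⟩ => ⟨ht', ?_⟩
    have hnext := hstep (t + 1)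
    rw [ht', mk_mem_cycleEdges_iff hf] at hnext
    have hback : g (t + 1 + 1) ≠ f (j + ε • t) := ht ▸ hg.ne (add_one_add_one_ne hℓ t)
    refine Or.resolve_right ?_ hback
    rcases Int.units_eq_one_or ε with rfl | rfl
    · simpa [← add_assoc] using hnext
    · simpa [← add_assoc, sub_eq_add_neg, or_comm] using hnext
  exact ⟨(j, ε), funext fun t => (hboth t).1.symm⟩

/-- The injective cyclic sequences of length `ℓ` that traverse a cycle with edges in `E`. -/
def cycleSequences (E : Finset (Sym2 V)) (ℓ : ℕ) [NeZero ℓ] [Fintype V] : Finset (ZMod ℓ → V) :=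
  {f | Injective f ∧ cycleEdges f ⊆ E}

/-- The edge sets of the cycles of length `ℓ` with edges in `E`. -/
def cycles (E : Finset (Sym2 V)) (ℓ : ℕ) [NeZero ℓ] [Fintype V] : Finset (Finset (Sym2 V)) :=
  (cycleSequences E ℓ).image cycleEdges

variable [Fintype V] {E : Finset (Sym2 V)}

theorem mem_cycleSequences {f : ZMod ℓ → V} :
    f ∈ cycleSequences E ℓ ↔ Injective f ∧ cycleEdges f ⊆ E := by
  simp [cycleSequences]

theorem card_filter_cycleEdges_eq (hℓ : 3 ≤ ℓ) {c : Finset (Sym2 V)} (hc : c ∈ cycles E ℓ) :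
    #{f ∈ cycleSequences E ℓ | cycleEdges f = c} = 2 * ℓ := by
  obtain ⟨f, hf, rfl⟩ := mem_image.1 hc
  obtain ⟨hfi, hfE⟩ := mem_cycleSequences.1 hf
  calc #{g ∈ cycleSequences E ℓ | cycleEdges g = cycleEdges f}
    _ = #(univ.image (retrace f)) := by
      congr 1
      ext g
      simp only [mem_filter, mem_cycleSequences, mem_image, mem_univ, true_and]
      constructor
      · exact fun ⟨⟨hg, _⟩, h⟩ => exists_retrace_eq hℓ hfi hg h.subset
      · rintro ⟨q, rfl⟩
        have hsub := cycleEdges_retrace_subset f q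
        have hq := injective_retrace hfi q
        exact ⟨⟨hq, hsub.trans hfE⟩, eq_of_subset_of_card_le hsub
          (by rw [card_cycleEdges hℓ hfi, card_cycleEdges hℓ hq])⟩
    _ = 2 * ℓ := by
      rw [card_image_of_injective _ (retrace_injective hℓ hfi), card_univ, Fintype.card_prod,
        ZMod.card, Fintype.card_units_int, mul_comm]

theorem card_cycleSequences (hℓ : 3 ≤ ℓ) (E : Finset (Sym2 V)) :
    #(cycleSequences E ℓ) = #(cycles E ℓ) * (2 * ℓ) :=
  (card_eq_sum_card_image cycleEdges _).trans <|
    sum_const_nat fun _ hc => card_filter_cycleEdges_eq hℓ hc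

end Cycles

section CycleTuples

open Finset Function

variable {I V : Type*} {L : I → ℕ}

/-- The `i`-th sequence of a tuple of cyclic sequences of lengths `L i`, the tuple being encoded
as one function on the disjoint union of the index sets. -/
def slice (F : (Σ i, ZMod (L i)) → V) (i : I) : ZMod (L i) → V := fun t => F ⟨i, t⟩

/-- The simultaneous shift `t ↦ t + 1` of all index sets of a tuple of cyclic sequences. -/
def rotation (L : I → ℕ) : Equiv.Perm (Σ i, ZMod (L i)) :=
  Equiv.sigmaCongrRight fun _ => Equiv.addRight 1

theorem rotation_rotation_ne (hL : ∀ i, 3 ≤ L i) (x : Σ i, ZMod (L i)) :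
    rotation L (rotation L x) ≠ x :=
  fun h => add_one_add_one_ne (hL x.1) x.2 (eq_of_heq (Sigma.ext_iff.1 h).2)

variable [DecidableEq V] [∀ i, NeZero (L i)]

/-- The tuple `F` consists of sequences that traverse pairwise distinct cycles, which may
intersect. -/
def IsCycleTuple (F : (Σ i, ZMod (L i)) → V) : Prop :=
  (∀ i, Injective (slice F i)) ∧ Injective fun i => cycleEdges (slice F i)

instance [Fintype I] [DecidableEq I] :
    DecidablePred (IsCycleTuple : ((Σ i, ZMod (L i)) → V) → Prop) :=
  fun _ => inferInstanceAs (Decidable (_ ∧ _))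

theorem isCycleTuple_of_injective {F : (Σ i, ZMod (L i)) → V} (hF : Injective F) :
    IsCycleTuple F := by
  refine ⟨fun i => hF.comp sigma_mk_injective, fun i j hij => ?_⟩
  have hmem := hij.subset (mk_mem_cycleEdges_self (slice F i) 0)
  obtain ⟨t, ht⟩ := mem_range_of_mem_stepEdges hmem (Sym2.mem_mk_left _ _)
  exact (congrArg Sigma.fst (hF ht)).symm

variable [Fintype I] {F : (Σ i, ZMod (L i)) → V}

/-- The set of all edges traversed by a tuple of cyclic sequences. -/
def tupleEdges (F : (Σ i, ZMod (L i)) → V) : Finset (Sym2 V) := stepEdges (rotation L) F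

theorem tupleEdges_subset_iff {E : Finset (Sym2 V)} :
    tupleEdges F ⊆ E ↔ ∀ i, cycleEdges (slice F i) ⊆ E := by
  simp only [tupleEdges, cycleEdges, stepEdges_subset_iff, Sigma.forall]
  rfl

theorem cycleEdges_slice_subset (F : (Σ i, ZMod (L i)) → V) (i : I) :
    cycleEdges (slice F i) ⊆ tupleEdges F :=
  tupleEdges_subset_iff.1 Subset.rfl i

theorem not_isDiag_of_mem_tupleEdges (hL : ∀ i, 3 ≤ L i) (hF : IsCycleTuple F) {e : Sym2 V}
    (he : e ∈ tupleEdges F) : ¬e.IsDiag := by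
  refine not_isDiag_of_mem_stepEdges (fun ⟨i, t⟩ h => ?_) he
  have hfix : t = t + 1 := hF.1 i h
  exact add_one_add_one_ne (hL i) t (by rw [← hfix, ← hfix])

theorem exists_two_lt_edgeDegree (hL : ∀ i, 3 ≤ L i) (hF : IsCycleTuple F)
    (hninj : ¬Injective F) : ∃ v, 2 < edgeDegree (tupleEdges F) v := by
  contrapose! hninj
  rintro ⟨i, a⟩ ⟨j, b⟩ hab
  obtain rfl : i = j := hF.2 <| cycleEdges_eq_of_apply_eq hninj (hL i) (hL j) (hF.1 i)
    (cycleEdges_slice_subset F i) (hF.1 j) (cycleEdges_slice_subset F j) hab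
  rw [hF.1 i hab]

theorem card_image_lt_card_tupleEdges [Finite V] (hL : ∀ i, 3 ≤ L i) (hF : IsCycleTuple F)
    (hninj : ¬Injective F) : #(univ.image F) < #(tupleEdges F) := by
  cases nonempty_fintype V
  obtain ⟨v, hv⟩ := exists_two_lt_edgeDegree hL hF hninj
  have hvF : v ∈ univ.image F := by
    by_contra hvF
    rw [tupleEdges, edgeDegree_stepEdges_eq_zero (by simpa using hvF)] at hv
    exact absurd hv (Nat.not_lt_zero _)
  have htwo : ∀ w ∈ univ.image F, 2 ≤ edgeDegree (tupleEdges F) w := by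
    simp only [mem_image, mem_univ, true_and, Sigma.exists, forall_exists_index]
    rintro _ i t rfl
    exact (edgeDegree_stepEdges (hF.1 i) (add_one_add_one_ne (hL i)) t).ge.trans
      (edgeDegree_mono (cycleEdges_slice_subset F i) _)
  have hdouble : 2 * #(univ.image F) < 2 * #(tupleEdges F) := by
    calc 2 * #(univ.image F) = ∑ w ∈ univ.image F, 2 := by rw [sum_const, smul_eq_mul, mul_comm]
      _ < ∑ w ∈ univ.image F, edgeDegree (tupleEdges F) w := sum_lt_sum htwo ⟨v, hvF, hv⟩
      _ ≤ ∑ w, edgeDegree (tupleEdges F) w := sum_le_univ_sum_of_nonneg fun _ => Nat.zero_le _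
      _ = 2 * #(tupleEdges F) := sum_edgeDegree fun e he => not_isDiag_of_mem_tupleEdges hL hF he
  exact Nat.lt_of_mul_lt_mul_left hdouble

end CycleTuples

section ExpectedTuples

open Finset Function

theorem card_filter_card_image_eq_le {P V : Type*} [Fintype P] [DecidableEq P] [Fintype V]
    [DecidableEq V] (j : ℕ) :
    #{F : P → V | #(univ.image F) = j} ≤ j ^ Fintype.card P * Fintype.card V ^ j := by
  calc #{F : P → V | #(univ.image F) = j}
    _ ≤ j ^ Fintype.card P * #(powersetCard j (univ : Finset V)) := by
      refine card_le_mul_card_image_of_maps_to (f := fun F => univ.image F)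
        (fun F hF => mem_powersetCard.2 ⟨subset_univ _, (mem_filter.1 hF).2⟩) _ fun A hA => ?_
      have hsub : ({F ∈ {F : P → V | #(univ.image F) = j} | univ.image F = A} : Finset _)
          ⊆ Fintype.piFinset fun _ => A := by
        intro F hF
        rw [Fintype.mem_piFinset, ← (mem_filter.1 hF).2]
        exact fun t => mem_image_of_mem F (mem_univ t)
      refine (card_le_card hsub).trans_eq ?_
      rw [Fintype.card_piFinset, prod_const, (mem_powersetCard.1 hA).2, card_univ]
    _ ≤ j ^ Fintype.card P * Fintype.card V ^ j := by
      rw [card_powersetCard, card_univ]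
      gcongr
      exact Nat.choose_le_pow _ _

theorem sum_inv_pow_card_image_le {P V : Type*} [Fintype P] [DecidableEq P] [Fintype V]
    [DecidableEq V] [Nonempty V] :
    ∑ F : P → V, ((Fintype.card V : ℝ) ^ #(univ.image F))⁻¹
      ≤ ∑ j ∈ range (Fintype.card P + 1), (j : ℝ) ^ Fintype.card P := by
  have hmaps : ∀ F ∈ (univ : Finset (P → V)), #(univ.image F) ∈ range (Fintype.card P + 1) :=
    fun F _ => mem_range_succ_iff.2 card_image_le
  rw [← sum_fiberwise_of_maps_to hmaps]
  refine sum_le_sum fun j _ => ?_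
  have : (0 : ℝ) < Fintype.card V := by exact_mod_cast Fintype.card_pos
  calc ∑ F : P → V with #(univ.image F) = j, ((Fintype.card V : ℝ) ^ #(univ.image F))⁻¹
    _ = #{F : P → V | #(univ.image F) = j} * ((Fintype.card V : ℝ) ^ j)⁻¹ := by
      rw [← nsmul_eq_mul]
      exact sum_eq_card_nsmul fun F hF => by rw [(mem_filter.1 hF).2]
    _ ≤ (j : ℝ) ^ Fintype.card P := by
      rw [← div_eq_mul_inv, div_le_iff₀ (by positivity)]
      exact_mod_cast card_filter_card_image_eq_le j

variable {I V : Type*} [Fintype I] {L : I → ℕ} [∀ i, NeZero (L i)]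

theorem card_sigma_zmod (L : I → ℕ) [∀ i, NeZero (L i)] :
    Fintype.card (Σ i, ZMod (L i)) = ∑ i, L i := by
  simp only [Fintype.card_sigma, ZMod.card]

theorem exists_abs_containProb_tupleEdges_sub_le_of_injective (hL : ∀ i, 3 ≤ L i) {d : ℕ}
    (hd : 1 ≤ d) :
    ∃ C : ℝ, 0 ≤ C ∧ ∀ (V : Type u) [Fintype V] [DecidableEq V] [Nonempty V]
      (F : (Σ i, ZMod (L i)) → V), Injective F → (regularEdgeSets V d).Nonempty →
        |containProb d (tupleEdges F) - ((d - 1) / Fintype.card V) ^ ∑ i, L i|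
          ≤ C / Fintype.card V ^ ((∑ i, L i) + 1) := by
  obtain ⟨C, hC, hasymp⟩ := exists_abs_containProb_mul_pow_sub_le.{u} d (∑ i, L i)
  refine ⟨C, hC, fun V _ _ _ F hF hne => ?_⟩
  have hcard : #(tupleEdges F) = ∑ i, L i :=
    (card_stepEdges hF (rotation_rotation_ne hL)).trans (card_sigma_zmod L)
  have hP := hasymp V (tupleEdges F) hcard
    (fun e he => not_isDiag_of_mem_tupleEdges hL (isCycleTuple_of_injective hF) he) hne
  rw [← Nat.cast_prod, tupleEdges, prod_descFactorial_edgeDegree_stepEdges d hF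
    (rotation_rotation_ne hL), card_sigma_zmod, ← tupleEdges] at hP
  push_cast [Nat.cast_sub hd] at hP
  have hd' : (1 : ℝ) ≤ d := by exact_mod_cast hd
  set m := ∑ i, L i
  set n : ℝ := (Fintype.card V : ℝ)
  set P := containProb d (tupleEdges F)
  have hn : 0 < n := Nat.cast_pos.2 Fintype.card_pos
  calc |P - ((d - 1) / n) ^ m|
    _ = |P * (d * n) ^ m - (d * (d - 1)) ^ m| / (d * n) ^ m := by
      rw [eq_div_iff (by positivity), ← abs_of_pos (show 0 < (d * n) ^ m by positivity),
        ← abs_mul, abs_of_pos (show 0 < (d * n) ^ m by positivity), sub_mul, ← mul_pow]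
      congr 3
      field_simp
    _ ≤ C / (d * n) ^ (m + 1) := by
      rw [div_le_div_iff₀ (by positivity) (by positivity), pow_succ, mul_comm (_ ^ m), ← mul_assoc]
      gcongr
    _ ≤ C / n ^ (m + 1) := by
      gcongr
      exact le_mul_of_one_le_left hn.le hd'

theorem exists_containProb_tupleEdges_le_of_not_injective (hL : ∀ i, 3 ≤ L i) {d : ℕ}
    (hd : 1 ≤ d) :
    ∃ C : ℝ, 0 ≤ C ∧ ∀ (V : Type u) [Fintype V] [DecidableEq V] [Nonempty V]
      (F : (Σ i, ZMod (L i)) → V), IsCycleTuple F → ¬Injective F →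
        containProb d (tupleEdges F) ≤ C / Fintype.card V ^ (#(univ.image F) + 1) := by
  choose C hC hbound using exists_containProb_mul_pow_le.{u} d
  refine ⟨∑ k ∈ range (Fintype.card (Σ i, ZMod (L i)) + 1), C k, sum_nonneg fun k _ => hC k,
    fun V _ _ _ F hF hninj => ?_⟩
  have hk : #(tupleEdges F) ∈ range (Fintype.card (Σ i, ZMod (L i)) + 1) :=
    mem_range_succ_iff.2 (card_stepEdges_le _ F)
  have hn : (1 : ℝ) ≤ Fintype.card V := by exact_mod_cast Fintype.card_pos
  have hd' : (1 : ℝ) ≤ d := by exact_mod_cast hd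
  calc containProb d (tupleEdges F)
    _ ≤ C #(tupleEdges F) / (d * Fintype.card V) ^ #(tupleEdges F) :=
      (le_div_iff₀ (by positivity)).2 (hbound _ V _ rfl)
    _ ≤ C #(tupleEdges F) / (Fintype.card V : ℝ) ^ (#(univ.image F) + 1) := by
      refine div_le_div_of_nonneg_left (hC _) (by positivity) ?_
      calc (Fintype.card V : ℝ) ^ (#(univ.image F) + 1)
        _ ≤ (Fintype.card V : ℝ) ^ #(tupleEdges F) :=
          pow_le_pow_right₀ hn (card_image_lt_card_tupleEdges hL hF hninj)
        _ ≤ (d * Fintype.card V) ^ #(tupleEdges F) := by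
          gcongr
          exact le_mul_of_one_le_left (by positivity) hd'
    _ ≤ _ := by
      gcongr
      exact single_le_sum (fun k _ => hC k) hk

variable [DecidableEq I] [Fintype V] [DecidableEq V]

/-- The tuples of sequences of lengths `L i` that traverse pairwise distinct cycles with edges
in `E`. -/
def cycleTuples (L : I → ℕ) [∀ i, NeZero (L i)] (E : Finset (Sym2 V)) :
    Finset ((Σ i, ZMod (L i)) → V) :=
  {F | IsCycleTuple F ∧ tupleEdges F ⊆ E}

theorem expect_card_cycleTuples (d : ℕ) :
    𝔼 E ∈ regularEdgeSets V d, (#(cycleTuples L E) : ℝ)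
      = ∑ F : (Σ i, ZMod (L i)) → V with IsCycleTuple F, containProb d (tupleEdges F) := by
  have hcount (E : Finset (Sym2 V)) : (#(cycleTuples L E) : ℝ)
      = ∑ F : (Σ i, ZMod (L i)) → V with IsCycleTuple F, if tupleEdges F ⊆ E then 1 else 0 := by
    rw [sum_boole, filter_filter, cycleTuples]
  simp only [expect_eq_sum_div_card, hcount, containProb, regularSupersets]
  rw [sum_comm, sum_div]
  simp only [sum_boole]

theorem sum_filter_isCycleTuple_ite_injective (x : ℝ) :
    ∑ F : (Σ i, ZMod (L i)) → V with IsCycleTuple F, (if Injective F then x else 0)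
      = (Fintype.card V).descFactorial (∑ i, L i) * x := by
  have hfilter : ({F | IsCycleTuple F ∧ Injective F} : Finset ((Σ i, ZMod (L i)) → V))
      = univ.filter Injective :=
    filter_congr fun F _ => and_iff_right_of_imp isCycleTuple_of_injective
  rw [← sum_filter, filter_filter, hfilter, sum_const, nsmul_eq_mul, ← card_sigma_zmod,
    ← Fintype.card_embedding_eq, ← Fintype.card_subtype,
    Fintype.card_congr (Equiv.subtypeInjectiveEquivEmbedding _ _)]

theorem exists_abs_expect_card_cycleTuples_sub_le (hL : ∀ i, 3 ≤ L i) {d : ℕ} (hd : 1 ≤ d) :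
    ∃ C : ℝ, ∀ (V : Type u) [Fintype V] [DecidableEq V] [Nonempty V],
      (regularEdgeSets V d).Nonempty →
      |𝔼 E ∈ regularEdgeSets V d, (#(cycleTuples L E) : ℝ)
        - (Fintype.card V).descFactorial (∑ i, L i) * ((d - 1) / Fintype.card V) ^ ∑ i, L i|
          ≤ C / Fintype.card V := by
  obtain ⟨C₁, hC₁, hinj⟩ := exists_abs_containProb_tupleEdges_sub_le_of_injective.{u} hL hd
  obtain ⟨C₂, hC₂, hninj⟩ := exists_containProb_tupleEdges_le_of_not_injective.{u} hL hd
  set m := Fintype.card (Σ i, ZMod (L i))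
  refine ⟨(C₁ + C₂) * ∑ j ∈ range (m + 1), (j : ℝ) ^ m, fun V _ _ _ hne => ?_⟩
  rw [expect_card_cycleTuples, ← sum_filter_isCycleTuple_ite_injective, ← sum_sub_distrib]
  set n : ℝ := (Fintype.card V : ℝ)
  have : 0 ≤ n := Nat.cast_nonneg _
  have hterm (F : (Σ i, ZMod (L i)) → V) (hF : IsCycleTuple F) :
      |containProb d (tupleEdges F) - if Injective F then ((d - 1) / n) ^ ∑ i, L i else 0|
        ≤ (C₁ + C₂) / n * (n ^ #(univ.image F))⁻¹ := by
    rw [← div_eq_mul_inv, div_div, ← pow_succ']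
    split_ifs with hFi
    · refine (hinj V F hFi hne).trans ?_
      rw [card_image_of_injective _ hFi, card_univ, card_sigma_zmod]
      gcongr
      exact le_add_of_nonneg_right hC₂
    · rw [sub_zero, abs_of_nonneg (containProb_nonneg d _)]
      refine (hninj V F hF hFi).trans ?_
      gcongr
      exact le_add_of_nonneg_left hC₁
  calc _ ≤ ∑ F : (Σ i, ZMod (L i)) → V with IsCycleTuple F,
        (C₁ + C₂) / n * (n ^ #(univ.image F))⁻¹ :=
      (abs_sum_le_sum_abs _ _).trans (sum_le_sum fun F hF => hterm F (mem_filter.1 hF).2)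
    _ ≤ ∑ F : (Σ i, ZMod (L i)) → V, (C₁ + C₂) / n * (n ^ #(univ.image F))⁻¹ :=
      sum_le_univ_sum_of_nonneg fun F => by positivity
    _ ≤ (C₁ + C₂) / n * ∑ j ∈ range (m + 1), (j : ℝ) ^ m := by
      rw [← mul_sum]
      gcongr
      exact sum_inv_pow_card_image_le
    _ = _ := by ring

end ExpectedTuples

section Moments

open Finset Function

theorem card_filter_piFinset_injective {ι β : Type*} [Fintype ι] [DecidableEq ι] [DecidableEq β]
    (T : Finset β) :
    #{e ∈ Fintype.piFinset fun _ : ι => T | Injective e} = (#T).descFactorial (Fintype.card ι) := by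
  rw [← Fintype.card_coe T, ← Fintype.card_embedding_eq, ← card_univ]
  symm
  refine card_bij (fun φ _ i => (φ i : β)) ?_ ?_ ?_
  · intro φ _
    rw [mem_filter, Fintype.mem_piFinset]
    exact ⟨fun i => (φ i).2, Subtype.val_injective.comp φ.injective⟩
  · intro φ _ ψ _ h
    ext i
    exact congrFun h i
  · intro e he
    rw [mem_filter, Fintype.mem_piFinset] at he
    exact ⟨⟨fun i => ⟨e i, he.1 i⟩, fun i j h => he.2 (Subtype.ext_iff.1 h)⟩, mem_univ _, rfl⟩

theorem card_filter_piFinset_injective_comp {ι α β : Type*} [Fintype ι] [DecidableEq ι]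
    [DecidableEq β] {c : α → β} {S : Finset α} {k : ℕ}
    (hk : ∀ b ∈ S.image c, #{a ∈ S | c a = b} = k) :
    #{F ∈ Fintype.piFinset fun _ : ι => S | Injective (c ∘ F)}
      = k ^ Fintype.card ι * (#(S.image c)).descFactorial (Fintype.card ι) := by
  rw [← card_filter_piFinset_injective, mul_comm,
    card_eq_sum_card_fiberwise (f := fun F => c ∘ F)
      (t := {e ∈ Fintype.piFinset fun _ : ι => S.image c | Injective e})]
  · refine sum_const_nat fun e he => ?_
    obtain ⟨heS, he⟩ := mem_filter.1 he
    have hfiber : {F ∈ {F ∈ Fintype.piFinset fun _ : ι => S | Injective (c ∘ F)} | c ∘ F = e}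
        = Fintype.piFinset fun i => {a ∈ S | c a = e i} := by
      ext F
      simp only [mem_filter, Fintype.mem_piFinset]
      constructor
      · rintro ⟨⟨hF, -⟩, rfl⟩
        exact fun i => ⟨hF i, rfl⟩
      · intro hF
        obtain rfl : c ∘ F = e := funext fun i => (hF i).2
        exact ⟨⟨fun i => (hF i).1, he⟩, rfl⟩
    rw [hfiber, Fintype.card_piFinset,
      prod_congr rfl fun i _ => hk _ (Fintype.mem_piFinset.1 heS i), prod_const, card_univ]
  · intro F hF
    simp only [coe_filter, Fintype.mem_piFinset, Set.mem_ofPred_eq] at hF ⊢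
    exact ⟨fun i => mem_image_of_mem c (hF.1 i), hF.2⟩

variable {κ V : Type*} {len : κ → ℕ} [∀ k, NeZero (len k)] [DecidableEq V]

theorem isCycleTuple_sigma_iff (hlen : ∀ k, 3 ≤ len k) (hinj : Injective len) {r : κ → ℕ}
    {F : (Σ i : (Σ k, Fin (r k)), ZMod (len i.1)) → V} :
    IsCycleTuple F ↔ ∀ k, (∀ j, Injective (slice F ⟨k, j⟩)) ∧
      Injective fun j => cycleEdges (slice F ⟨k, j⟩) := by
  constructor
  · exact fun hF k => ⟨fun j => hF.1 ⟨k, j⟩, hF.2.comp sigma_mk_injective⟩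
  · refine fun hF => ⟨fun i => (hF i.1).1 i.2, ?_⟩
    rintro ⟨k, j⟩ ⟨k', j'⟩ h
    have hcard := congrArg card h
    simp only [card_cycleEdges (hlen _) ((hF _).1 _)] at hcard
    obtain rfl := hinj hcard
    rw [(hF k).2 h]

variable [Fintype κ] [Fintype V]

theorem card_cycleTuples [DecidableEq κ] (hlen : ∀ k, 3 ≤ len k) (hinj : Injective len) (r : κ → ℕ)
    (E : Finset (Sym2 V)) :
    #(cycleTuples (fun i : Σ k, Fin (r k) => len i.1) E)
      = ∏ k, (2 * len k) ^ r k * (#(cycles E (len k))).descFactorial (r k) := by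
  have hfactor (k : κ) : (2 * len k) ^ r k * (#(cycles E (len k))).descFactorial (r k)
      = #{h ∈ Fintype.piFinset fun _ : Fin (r k) => cycleSequences E (len k) |
          Injective (cycleEdges ∘ h)} := by
    simpa [cycles] using (card_filter_piFinset_injective_comp (ι := Fin (r k))
      fun c hc => card_filter_cycleEdges_eq (hlen k) hc).symm
  simp only [hfactor]
  rw [← Fintype.card_piFinset]
  refine card_equiv ⟨fun F k j t => F ⟨⟨k, j⟩, t⟩, fun h x => h x.1.1 x.1.2 x.2, fun _ => rfl,
    fun _ => rfl⟩ fun F => ?_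
  simp only [cycleTuples, mem_filter, mem_univ, true_and, isCycleTuple_sigma_iff hlen hinj,
    tupleEdges_subset_iff, Sigma.forall, Fintype.mem_piFinset, mem_cycleSequences, Equiv.coe_fn_mk,
    forall_and]
  exact and_right_comm

theorem tendsto_expect_card_cycleTuples {I : Type*} [Fintype I] [DecidableEq I] {L : I → ℕ}
    [∀ i, NeZero (L i)] (hL : ∀ i, 3 ≤ L i) {d : ℕ} (hd : 1 ≤ d) {l : Filter ℕ} (hl : l ≤ atTop)
    (hne : ∀ᶠ n in l, (regularEdgeSets (Fin n) d).Nonempty) :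
    Tendsto (fun n => 𝔼 E ∈ regularEdgeSets (Fin n) d, (#(cycleTuples L E) : ℝ)) l
      (𝓝 ((d - 1) ^ ∑ i, L i)) := by
  obtain ⟨C, hC⟩ := exists_abs_expect_card_cycleTuples_sub_le.{0} hL hd
  set m := ∑ i, L i
  have hpos : ∀ᶠ n : ℕ in atTop, 0 < n := eventually_gt_atTop 0
  have hdesc : Tendsto (fun n : ℕ => (n.descFactorial m : ℝ) / n ^ m) atTop (𝓝 1) :=
    (Asymptotics.isEquivalent_iff_tendsto_one (hpos.mono fun n hn => by positivity)).1
      (isEquivalent_descFactorial m)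
  have hmain : Tendsto (fun n : ℕ => (n.descFactorial m : ℝ) * ((d - 1) / n) ^ m) l
      (𝓝 ((d - 1) ^ m)) := by
    simpa only [one_mul, div_pow, div_mul_eq_mul_div, mul_div_assoc] using
      (hdesc.mono_left hl).mul_const (((d : ℝ) - 1) ^ m)
  have herror : Tendsto (fun n : ℕ => 𝔼 E ∈ regularEdgeSets (Fin n) d, (#(cycleTuples L E) : ℝ)
      - n.descFactorial m * ((d - 1) / n) ^ m) l (𝓝 0) := by
    refine squeeze_zero_norm' ?_ ((tendsto_const_div_atTop_nhds_zero_nat C).mono_left hl)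
    filter_upwards [hl hpos, hne] with n hn hreg
    have : Nonempty (Fin n) := ⟨⟨0, hn⟩⟩
    simpa using hC (Fin n) hreg
  simpa using herror.add hmain

theorem tendsto_expect_prod_choose_card_cycles (hlen : ∀ k, 3 ≤ len k) (hinj : Injective len)
    {d : ℕ} (hd : 1 ≤ d) {l : Filter ℕ} (hl : l ≤ atTop)
    (hne : ∀ᶠ n in l, (regularEdgeSets (Fin n) d).Nonempty) (r : κ → ℕ) :
    Tendsto (fun n => 𝔼 E ∈ regularEdgeSets (Fin n) d,
        ∏ k, ((#(cycles E (len k))).choose (r k) : ℝ)) l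
      (𝓝 (∏ k, ((d - 1) ^ len k / (2 * len k) : ℝ) ^ r k / (r k).factorial)) := by
  classical
  set c : ℝ := ∏ k, ((2 * len k) ^ r k * (r k).factorial : ℝ)
  have hc : c ≠ 0 := prod_ne_zero_iff.2 fun k _ => by
    have : len k ≠ 0 := NeZero.ne _
    positivity
  have hcount (n : ℕ) (E : Finset (Sym2 (Fin n))) :
      ∏ k, ((#(cycles E (len k))).choose (r k) : ℝ)
        = #(cycleTuples (fun i : Σ k, Fin (r k) => len i.1) E) / c := by
    rw [eq_div_iff hc, ← prod_mul_distrib, card_cycleTuples hlen hinj, Nat.cast_prod]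
    refine prod_congr rfl fun k _ => ?_
    rw [Nat.descFactorial_eq_factorial_mul_choose]
    push_cast
    ring
  have hlimit : ∏ k, ((d - 1) ^ len k / (2 * len k) : ℝ) ^ r k / (r k).factorial
      = (d - 1) ^ (∑ i : Σ k, Fin (r k), len i.1) / c := by
    rw [Fintype.sum_sigma, ← prod_pow_eq_pow_sum, ← prod_div_distrib]
    refine prod_congr rfl fun k _ => ?_
    simp only [sum_const, card_univ, Fintype.card_fin, smul_eq_mul]
    rw [div_pow, div_div, mul_comm (r k), pow_mul]
  clear_value c
  rw [hlimit]
  refine ((tendsto_expect_card_cycleTuples (L := fun i : Σ k, Fin (r k) => len i.1)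
    (fun i => hlen i.1) hd hl hne).div_const c).congr fun n => ?_
  rw [expect_div]
  exact expect_congr rfl fun E _ => (hcount n E).symm

end Moments

section RegularGraphs

open Finset SimpleGraph

theorem ncard_neighborSet_circulantGraph {Γ : Type*} [AddGroup Γ] {s : Set Γ} (h0 : 0 ∉ s)
    (hneg : ∀ x ∈ s, -x ∈ s) (v : Γ) : ((circulantGraph s).neighborSet v).ncard = s.ncard := by
  have himage : (circulantGraph s).neighborSet v = (· + v) '' s := by
    ext u
    rw [mem_neighborSet, circulantGraph_adj, Set.image_add_right, Set.mem_preimage,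
      ← sub_eq_add_neg]
    constructor
    · rintro ⟨-, h | h⟩
      · simpa using hneg _ h
      · exact h
    · exact fun h => ⟨fun huv => h0 (by simpa [huv] using h), .inr h⟩
  rw [himage, Set.ncard_image_of_injective _ (add_left_injective v)]

theorem exists_finset_forall_sub_mem {d n : ℕ} (hdn : d < n) (heven : Even (d * n)) :
    ∃ T ⊆ Ioo 0 n, (∀ x ∈ T, n - x ∈ T) ∧ #T = d := by
  rcases Nat.even_or_odd (n + d) with hsum | hsum
  · have hn : Even n := by grind
    refine ⟨(Icc ((n - d) / 2) ((n + d) / 2)).erase (n / 2), ?_, ?_, ?_⟩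
    · grind
    · grind
    · rw [card_erase_of_mem (by grind), Nat.card_Icc]
      grind
  · refine ⟨Icc ((n + 1 - d) / 2) ((n + d - 1) / 2), ?_, ?_, ?_⟩
    · grind
    · grind
    · rw [Nat.card_Icc]
      grind

theorem nonempty_regularGraphs {d n : ℕ} (hdn : d < n) (heven : Even (d * n)) :
    (regularGraphs d n).Nonempty := by
  have : NeZero n := ⟨by omega⟩
  obtain ⟨T, hT, hneg, rfl⟩ := exists_finset_forall_sub_mem hdn heven
  have hlt (x : ℕ) (hx : x ∈ T) : x < n := (mem_Ioo.1 (hT hx)).2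
  refine ⟨circulantGraph (T.attachFin hlt : Set (Fin n)), fun v => ?_⟩
  rw [ncard_neighborSet_circulantGraph, Set.ncard_coe_finset, card_attachFin]
  · rw [mem_coe, mem_attachFin]
    exact fun h => (mem_Ioo.1 (hT h)).1.ne rfl
  · intro x hx
    rw [mem_coe, mem_attachFin] at hx ⊢
    have hx' := mem_Ioo.1 (hT hx)
    rw [Fin.val_neg', Nat.mod_eq_of_lt (by omega)]
    exact hneg _ hx

theorem ncard_neighborSet_fromEdgeSet {V : Type*} [Finite V] [DecidableEq V]
    {E : Finset (Sym2 V)} (hE : ∀ e ∈ E, ¬e.IsDiag) (v : V) :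
    ((fromEdgeSet (E : Set (Sym2 V))).neighborSet v).ncard = edgeDegree E v := by
  cases nonempty_fintype V
  rw [← card_filter_mk_mem, ← Set.ncard_coe_finset]
  congr 1
  ext x
  rw [mem_neighborSet, fromEdgeSet_adj, mem_coe, mem_coe, mem_filter_univ]
  exact and_iff_left_of_imp fun h => hE _ h

theorem bijOn_fromEdgeSet (d n : ℕ) :
    Set.BijOn (fun E : Finset (Sym2 (Fin n)) => fromEdgeSet (E : Set (Sym2 (Fin n))))
      (regularEdgeSets (Fin n) d) (regularGraphs d n) := by
  classical
  have hedge {E : Finset (Sym2 (Fin n))} (hE : ∀ e ∈ E, ¬e.IsDiag) :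
      (fromEdgeSet (E : Set (Sym2 (Fin n)))).edgeSet = E := by
    rw [edgeSet_fromEdgeSet, sdiff_eq_left, Set.disjoint_left]
    exact hE
  refine ⟨fun E hE v => ?_, fun E hE E' hE' h => ?_, fun G hG => ⟨G.edgeFinset, ?_, ?_⟩⟩
  · obtain ⟨hdiag, hdeg⟩ := mem_regularEdgeSets.1 hE
    rw [ncard_neighborSet_fromEdgeSet hdiag, hdeg]
  · rw [← coe_inj, ← hedge (mem_regularEdgeSets.1 hE).1, ← hedge (mem_regularEdgeSets.1 hE').1]
    exact congrArg edgeSet h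
  · have hdiag : ∀ e ∈ G.edgeFinset, ¬e.IsDiag := fun e he =>
      G.not_isDiag_of_mem_edgeSet (mem_edgeFinset.1 he)
    refine mem_regularEdgeSets.2 ⟨hdiag, fun v => ?_⟩
    rw [← ncard_neighborSet_fromEdgeSet hdiag, coe_edgeFinset, fromEdgeSet_edgeSet]
    exact hG v
  · simp

theorem regularPr_eq_expect (d n : ℕ) (S : Set (SimpleGraph (Fin n)))
    [DecidablePred (· ∈ S)] :
    regularPr d n S = 𝔼 E ∈ regularEdgeSets (Fin n) d,
      if fromEdgeSet (E : Set (Sym2 (Fin n))) ∈ S then 1 else 0 := by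
  have hbij := bijOn_fromEdgeSet d n
  have hevent : regularGraphs d n ∩ S = (fun E : Finset (Sym2 (Fin n)) => fromEdgeSet E) ''
      (({E ∈ regularEdgeSets (Fin n) d | fromEdgeSet (E : Set (Sym2 (Fin n))) ∈ S} :
        Finset (Finset (Sym2 (Fin n)))) : Set (Finset (Sym2 (Fin n)))) := by
    rw [← hbij.image_eq, ← Set.image_inter_preimage, coe_filter]
    rfl
  rw [regularPr, hevent, ← hbij.image_eq, hbij.injOn.ncard_image,
    (hbij.injOn.mono (coe_subset.2 (filter_subset _ _))).ncard_image,
    Set.ncard_coe_finset, Set.ncard_coe_finset, expect_eq_sum_div_card, sum_boole]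

theorem cycleCount_fromEdgeSet {n ℓ : ℕ} [NeZero ℓ] (hℓ : 3 ≤ ℓ) (E : Finset (Sym2 (Fin n))) :
    cycleCount (fromEdgeSet (E : Set (Sym2 (Fin n)))) ℓ = #(cycles E ℓ) := by
  have hsequences : {f : ZMod ℓ → Fin n | Function.Injective f ∧
      ∀ t, (fromEdgeSet (E : Set (Sym2 (Fin n)))).Adj (f t) (f (t + 1))} = cycleSequences E ℓ := by
    have : Fact (1 < ℓ) := ⟨by omega⟩
    ext f
    simp only [Set.mem_ofPred_eq, mem_coe, mem_cycleSequences, cycleEdges_subset_iff,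
      fromEdgeSet_adj]
    exact and_congr_right fun hf => forall_congr' fun t => and_iff_left (hf.ne (by simp))
  rw [cycleCount, hsequences, Set.ncard_coe_finset, card_cycleSequences hℓ,
    Nat.mul_div_cancel _ (by positivity)]

end RegularGraphs

section Limits

open Finset SimpleGraph

theorem tendsto_regularPr_cycleCount_eq {d : ℕ} (hd : 1 ≤ d) {S : Finset ℕ}
    (hS : ∀ ℓ ∈ S, 3 ≤ ℓ) (a : ℕ → ℕ) :
    Tendsto (fun n => regularPr d n {G | ∀ ℓ ∈ S, cycleCount G ℓ = a ℓ})
      (atTop ⊓ 𝓟 {n | Even (d * n)})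
      (𝓝 (∏ ℓ ∈ S, Real.exp (-((d - 1) ^ ℓ / (2 * ℓ))) * ((d - 1) ^ ℓ / (2 * ℓ)) ^ a ℓ
        / (a ℓ).factorial)) := by
  classical
  have (ℓ : S) : NeZero (ℓ : ℕ) := ⟨by have := hS ℓ ℓ.2; omega⟩
  have hne : ∀ᶠ n in atTop ⊓ 𝓟 {n | Even (d * n)}, (regularEdgeSets (Fin n) d).Nonempty := by
    rw [eventually_inf_principal]
    filter_upwards [eventually_gt_atTop d] with n hdn heven
    rw [← coe_nonempty, ← Set.image_nonempty, (bijOn_fromEdgeSet d n).image_eq]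
    exact nonempty_regularGraphs hdn heven
  have hmoments (r : S → ℕ) := tendsto_expect_prod_choose_card_cycles (fun ℓ : S => hS ℓ ℓ.2)
    Subtype.val_injective hd inf_le_left hne r
  rw [← prod_coe_sort, ← one_mul (∏ _, _)]
  refine (tendsto_expect_prod_ite_eq (W := fun _ _ => 1) (univ : Finset S)
    (fun _ _ => zero_le_one) (by simpa only [one_mul] using hmoments) fun ℓ => a ℓ).congr
    fun n => ?_
  rw [regularPr_eq_expect]
  refine expect_congr rfl fun E _ => ?_
  rw [one_mul, prod_ite_zero, prod_const_one]
  congr 1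
  have hcount (ℓ : S) := cycleCount_fromEdgeSet (hS ℓ ℓ.2) E
  simp only [← hcount, mem_univ, forall_const, Set.mem_ofPred_eq, Subtype.forall]

theorem regularPr_inter_add_diff (d n : ℕ) (S T : Set (SimpleGraph (Fin n))) :
    regularPr d n (S ∩ T) + regularPr d n (S \ T) = regularPr d n S := by
  rw [regularPr, regularPr, regularPr, ← add_div, ← Set.inter_assoc, ← Set.inter_sdiff_assoc]
  norm_cast
  rw [Set.ncard_inter_add_ncard_sdiff_eq_ncard _ _ (Set.toFinite _)]

theorem tendsto_regularPr_cycleCount_ne_zero {d : ℕ} (hd : 1 ≤ d) {A B : Finset ℕ}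
    (hA : ∀ ℓ ∈ A, 3 ≤ ℓ) (hB : ∀ ℓ ∈ B, 3 ≤ ℓ) (hAB : Disjoint A B) :
    Tendsto (fun n => regularPr d n
        {G | (∀ ℓ ∈ A, cycleCount G ℓ ≠ 0) ∧ ∀ ℓ ∈ B, cycleCount G ℓ = 0})
      (atTop ⊓ 𝓟 {n | Even (d * n)})
      (𝓝 ((∏ ℓ ∈ A, (1 - Real.exp (-((d - 1) ^ ℓ / (2 * ℓ)))))
        * ∏ ℓ ∈ B, Real.exp (-((d - 1) ^ ℓ / (2 * ℓ))))) := by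
  induction A using Finset.induction_on generalizing B with
  | empty => simpa using tendsto_regularPr_cycleCount_eq hd hB fun _ => 0
  | insert k A hk ih =>
    rw [forall_mem_insert] at hA
    rw [disjoint_insert_left] at hAB
    have hB' : ∀ ℓ ∈ insert k B, 3 ≤ ℓ := forall_mem_insert _ _ _ |>.2 ⟨hA.1, hB⟩
    convert (ih hA.2 hB hAB.2).sub
      (ih hA.2 hB' (disjoint_insert_right.2 ⟨hk, hAB.2⟩)) using 2 with n
    · rw [eq_sub_iff_add_eq', ← regularPr_inter_add_diff d n
        {G | (∀ ℓ ∈ A, cycleCount G ℓ ≠ 0) ∧ ∀ ℓ ∈ B, cycleCount G ℓ = 0} {G | cycleCount G k = 0}]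
      congr 2 <;> ext G <;> grind
    · rw [prod_insert hk, prod_insert hAB.1]
      ring

end Limits

end RandomRegular

/-- In the uniformly random `d`-regular graph on `n` vertices (`d ≥ 2` fixed, along
`n` with `dn` even), the numbers of cycles of the lengths `3 ≤ ℓ ≤ C` converge
jointly in distribution to independent Poisson variables with means `(d-1)^ℓ/(2ℓ)`.
Consequently, for the random 2-regular graph, the probability that the graph
contains a cycle of length `ℓ` for each `ℓ ∈ A` and none for each `ℓ ∈ B` tends to
`∏_{ℓ∈A}(1 - e^{-1/(2ℓ)}) · ∏_{ℓ∈B} e^{-1/(2ℓ)}`. -/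
theorem firstOrderComplexity.regular_cycles_poisson (d : ℕ) (hd : 2 ≤ d) (C : ℕ) :
    (∀ a : ℕ → ℕ,
      Tendsto
        (fun n => regularPr d n {G | ∀ ℓ, 3 ≤ ℓ → ℓ ≤ C → cycleCount G ℓ = a ℓ})
        (atTop ⊓ Filter.principal {n | Even (d * n)})
        (𝓝 (∏ ℓ ∈ Finset.Icc 3 C,
          Real.exp (-(((d : ℝ) - 1) ^ ℓ / (2 * ℓ)))
            * (((d : ℝ) - 1) ^ ℓ / (2 * ℓ)) ^ (a ℓ) / (Nat.factorial (a ℓ))))) ∧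
    (∀ A B : Finset ℕ, ↑A ⊆ Set.Icc 3 C → ↑B ⊆ Set.Icc 3 C → Disjoint A B →
      Tendsto
        (fun n => regularPr 2 n
          {G | (∀ ℓ ∈ A, cycleCount G ℓ ≠ 0) ∧ (∀ ℓ ∈ B, cycleCount G ℓ = 0)})
        atTop
        (𝓝 ((∏ ℓ ∈ A, (1 - Real.exp (-(1 / (2 * (ℓ : ℝ))))))
              * ∏ ℓ ∈ B, Real.exp (-(1 / (2 * (ℓ : ℝ))))))) := by
  refine ⟨fun a => ?_, fun A B hA hB hAB => ?_⟩
  · simpa using RandomRegular.tendsto_regularPr_cycleCount_eq (one_le_two.trans hd)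
      (fun ℓ hℓ => (Finset.mem_Icc.1 hℓ).1) a
  · have hone : (2 : ℝ) - 1 = 1 := by norm_num
    simpa [hone] using RandomRegular.tendsto_regularPr_cycleCount_ne_zero one_le_two
      (fun ℓ hℓ => (hA hℓ).1) (fun ℓ hℓ => (hB hℓ).1) hAB
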